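/- In the nonlinear setting with standing conditions (N1)–(N5): let C be the family of all closed subintervals of [0,1] that intersect the set {b_j : j ≥ 0}. Then for every ε > 0 there exists n_0 ∈ ℕ such that for every n ≥ n_0 and every Δ ∈ C, one has m_n(Δ)/|Δ|^{h_n} ≤ 1 + ε. -/

import Mathlib

open Set Filter MeasureTheory Topology

noncomputable section

/-- Composition `g_{i₁} ∘ g_{i₂} ∘ ⋯ ∘ g_{i_l}` along a finite word. -/
def wordComp (g : ℕ → ℝ → ℝ) : List ℕ → ℝ → ℝ
  | [] => id
  | k :: w => g k ∘ wordComp g w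

/-- The limit set `J_n` of the IFS `S_n = {g_1, …, g_n}`. -/
def limitSet (g : ℕ → ℝ → ℝ) (n : ℕ) : Set ℝ :=
  ⋂ l : ℕ, ⋃ w ∈ {w : List ℕ | w.length = l + 1 ∧ ∀ i ∈ w, 1 ≤ i ∧ i ≤ n},
    wordComp g w '' Set.Icc (0 : ℝ) 1

/-- The distortion `κ(g) = sup_{x,y ∈ [0,1]} |g′(y)|/|g′(x)|` of a map with derivative `f'`. -/
def distortion (f' : ℝ → ℝ) : ℝ :=
  ⨆ x ∈ Set.Icc (0 : ℝ) 1, ⨆ y ∈ Set.Icc (0 : ℝ) 1, |f' y| / |f' x|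

/-- The nonlinear setting of the paper: a strictly decreasing sequence `b_k → 0` with `b_0 = 1`,
    decreasing `C²` diffeomorphisms `g_k : [0,1] → [b_k, b_{k-1}]` (with first and second
    derivatives `g'` and `g''`), the Hausdorff dimensions `h_n` of the limit sets `J_n`, and
    the standing conditions (N1)–(N5). -/
structure NonlinearIFS where
  b : ℕ → ℝ
  g : ℕ → ℝ → ℝ
  g' : ℕ → ℝ → ℝ
  g'' : ℕ → ℝ → ℝ
  h : ℕ → ℝ
  b_zero : b 0 = 1
  b_anti : StrictAnti b
  b_lim : Filter.Tendsto b Filter.atTop (nhds 0)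
  g_image : ∀ k, 1 ≤ k → g k '' Set.Icc (0 : ℝ) 1 = Set.Icc (b k) (b (k - 1))
  g_anti : ∀ k, 1 ≤ k → StrictAntiOn (g k) (Set.Icc (0 : ℝ) 1)
  g_zero : ∀ k, 1 ≤ k → g k 0 = b (k - 1)
  g_one : ∀ k, 1 ≤ k → g k 1 = b k
  deriv1 : ∀ k, 1 ≤ k → ∀ x ∈ Set.Icc (0 : ℝ) 1, HasDerivAt (g k) (g' k x) x
  deriv2 : ∀ k, 1 ≤ k → ∀ x ∈ Set.Icc (0 : ℝ) 1, HasDerivAt (g' k) (g'' k x) x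
  deriv_ne : ∀ k, 1 ≤ k → ∀ x ∈ Set.Icc (0 : ℝ) 1, g' k x ≠ 0
  h_dim : ∀ n, 1 ≤ n → dimH (limitSet g n) = ENNReal.ofReal (h n)
  N1 : Filter.Tendsto (fun n : ℕ => (1 - h n) * Real.log n) Filter.atTop (nhds 0)
  N2 : Filter.Tendsto (fun n : ℕ => ⨆ k ∈ Set.Ici n, b k / b (k + 1)) Filter.atTop (nhds 1)
  N3 : ∃ c : ℝ, 0 < c ∧ ∀ n, 1 ≤ n → ∀ x ∈ Set.Icc (0 : ℝ) 1, |g'' n x / g' n x| < c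
  N4 : Filter.Tendsto (fun n : ℕ => distortion (g' n)) Filter.atTop (nhds 1)
  N5 : ∃ α : ℝ, α < 1 ∧ ∀ n, 1 ≤ n → ∀ x ∈ Set.Icc (0 : ℝ) 1, |g' n x| < α

/-- The normalized Hausdorff measure `m_n(A) = H_{h_n}(A ∩ J_n)/H_{h_n}(J_n)`. -/
def normMeas (S : NonlinearIFS) (n : ℕ) (A : Set ℝ) : ENNReal :=
  μH[S.h n] (A ∩ limitSet S.g n) / μH[S.h n] (limitSet S.g n)

/-!
Normalizing the Hausdorff measure gives a measure `ν` on the limit set that a composition of the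
maps increases by at most the `h`-th power of its Lipschitz constant. Consider a cylinder whose
density `ν(cylinder) / length ^ h` is nearly maximal. By Hölder's inequality its `n ^ l` descendants
of generation `l` have total `length ^ h` at most `(n ^ l) ^ (1 - h)` times its own, and this factor
tends to `1`, so every fixed descendant also has nearly maximal density. Bounded distortion
transfers this to the cylinders of generation `l` themselves, whose masses sum to at most `1` while
their lengths sum to nearly `1`: the maximal density is nearly `1`.

The same Hölder estimate bounds the density of an interval that is covered economically by cylinders
of one generation. This settles intervals of length bounded below; initial segments `[0, x]`, as
`b k / b (k + 1) → 1`; and, through the decreasing map `g 1`, final segments `[x, 1]`. An interval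
containing some `b j` is cut by the points `b k` into images of initial and final segments.
-/

open scoped NNReal

/-! ### Monotone or antitone functions on an interval -/

/-- `f` is monotone or antitone on `s`; unlike either alternative alone, this is stable under
composition with decreasing maps. -/
def MonotoneOrAntitoneOn {α β : Type*} [Preorder α] [Preorder β] (f : α → β) (s : Set α) : Prop :=
  MonotoneOn f s ∨ AntitoneOn f s

namespace MonotoneOrAntitoneOn

theorem comp {α β γ : Type*} [Preorder α] [Preorder β] [Preorder γ] {f : β → γ} {g : α → β}
    {s : Set α} {t : Set β} (hf : MonotoneOrAntitoneOn f t) (hg : MonotoneOrAntitoneOn g s)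
    (hst : MapsTo g s t) : MonotoneOrAntitoneOn (f ∘ g) s := by
  rcases hf with hf | hf <;> rcases hg with hg | hg
  · exact .inl (hf.comp hg hst)
  · exact .inr (hf.comp_AntitoneOn hg hst)
  · exact .inr (hf.comp_MonotoneOn hg hst)
  · exact .inl (hf.comp hg hst)

variable {f : ℝ → ℝ} {s : Set ℝ} {a b x : ℝ}

theorem apply_mem_uIcc (hf : MonotoneOrAntitoneOn f s) (hs : s.OrdConnected) (ha : a ∈ s)
    (hb : b ∈ s) (hx : x ∈ uIcc a b) : f x ∈ uIcc (f a) (f b) := by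
  have hsub := hs.uIcc_subset ha hb
  rcases hf with hf | hf
  · exact (hf.mono hsub).mapsTo_uIcc hx
  · exact (hf.mono hsub).mapsTo_uIcc hx

theorem abs_sub_add_abs_sub (hf : MonotoneOrAntitoneOn f s) (hs : s.OrdConnected) (ha : a ∈ s)
    (hb : b ∈ s) (hx : x ∈ uIcc a b) : |f a - f x| + |f x - f b| = |f a - f b| := by
  have hfx := hf.apply_mem_uIcc hs ha hb hx
  rw [← segment_eq_uIcc] at hfx
  simpa only [Real.dist_eq] using dist_add_dist_of_mem_segment hfx

theorem abs_sub_le_of_uIcc_subset {c d : ℝ} (hf : MonotoneOrAntitoneOn f s) (hs : s.OrdConnected)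
    (ha : a ∈ s) (hb : b ∈ s) (hcd : uIcc c d ⊆ uIcc a b) : |f d - f c| ≤ |f b - f a| :=
  abs_sub_le_of_uIcc_subset_uIcc <| uIcc_subset_uIcc
    (hf.apply_mem_uIcc hs ha hb (hcd left_mem_uIcc))
    (hf.apply_mem_uIcc hs ha hb (hcd right_mem_uIcc))

end MonotoneOrAntitoneOn

/-! ### Secant distortion -/

/-- Bounded distortion stated with secant slopes instead of derivatives: within an interval with
endpoints in `s`, any two secant slopes of `f` differ at most by the factor `exp (c * length)`.
The inequality is cross-multiplied so that degenerate secants are harmless. -/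
def SecantDistortionOn (c : ℝ≥0) (f : ℝ → ℝ) (s : Set ℝ) : Prop :=
  ∀ ⦃p⦄, p ∈ s → ∀ ⦃q⦄, q ∈ s → ∀ ⦃x⦄, x ∈ uIcc p q → ∀ ⦃y⦄, y ∈ uIcc p q →
    ∀ ⦃x'⦄, x' ∈ uIcc p q → ∀ ⦃y'⦄, y' ∈ uIcc p q →
      |f y - f x| * |y' - x'| ≤ Real.exp (c * |p - q|) * (|f y' - f x'| * |y - x|)

namespace SecantDistortionOn

variable {c c' L : ℝ≥0} {f g : ℝ → ℝ} {s t : Set ℝ}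

theorem id : SecantDistortionOn 0 id s := by
  intro p _ q _ x _ y _ x' _ y' _
  simp [mul_comm]

theorem weaken (hf : SecantDistortionOn c f s) (hc : c ≤ c') : SecantDistortionOn c' f s := by
  intro p hp q hq x hx y hy x' hx' y' hy'
  refine (hf hp hq hx hy hx' hy').trans ?_
  gcongr

theorem comp (hf : SecantDistortionOn c f t) (hg : SecantDistortionOn c' g s)
    (hs : s.OrdConnected) (hgmono : MonotoneOrAntitoneOn g s) (hginj : InjOn g s)
    (hglip : LipschitzOnWith L g s) (hst : MapsTo g s t) :
    SecantDistortionOn (c * L + c') (f ∘ g) s := by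
  intro p hp q hq x hx y hy x' hx' y' hy'
  have hsub := hs.uIcc_subset hp hq
  rcases eq_or_ne y' x' with rfl | hne'
  · simp
  rcases eq_or_ne y x with rfl | hne
  · simp
  have hinner : 0 < |g y - g x| := abs_pos.2 (sub_ne_zero.2 (hginj.ne (hsub hy) (hsub hx) hne))
  have hinner' : 0 < |g y' - g x'| :=
    abs_pos.2 (sub_ne_zero.2 (hginj.ne (hsub hy') (hsub hx') hne'))
  have hmem : ∀ z ∈ uIcc p q, g z ∈ uIcc (g p) (g q) := fun z hz =>
    hgmono.apply_mem_uIcc hs hp hq hz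
  have houter := hf (hst hp) (hst hq) (hmem x hx) (hmem y hy) (hmem x' hx') (hmem y' hy')
  have hlen : |g p - g q| ≤ L * |p - q| := by
    simpa only [Real.dist_eq] using hglip.dist_le_mul p hp q hq
  refine le_of_mul_le_mul_right ?_ (mul_pos hinner hinner')
  calc |f (g y) - f (g x)| * |y' - x'| * (|g y - g x| * |g y' - g x'|)
      = (|f (g y) - f (g x)| * |g y' - g x'|) * (|g y - g x| * |y' - x'|) := by ring
    _ ≤ (Real.exp (c * (L * |p - q|)) * (|f (g y') - f (g x')| * |g y - g x|)) *
          (Real.exp (c' * |p - q|) * (|g y' - g x'| * |y - x|)) := by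
        refine mul_le_mul (houter.trans ?_) (hg hp hq hx hy hx' hy') (by positivity)
          (by positivity)
        gcongr
    _ = (Real.exp (c * (L * |p - q|)) * Real.exp (c' * |p - q|)) *
          (|f (g y') - f (g x')| * |y - x|) * (|g y - g x| * |g y' - g x'|) := by ring
    _ = Real.exp (↑(c * L + c') * |p - q|) * (|f (g y') - f (g x')| * |y - x|) *
          (|g y - g x| * |g y' - g x'|) := by
        rw [← Real.exp_add]; push_cast; ring_nf

theorem of_Icc (hf : SecantDistortionOn c f (Icc 0 1)) {x y x' y' : ℝ} (hx : x ∈ Icc (0 : ℝ) 1)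
    (hy : y ∈ Icc (0 : ℝ) 1) (hx' : x' ∈ Icc (0 : ℝ) 1) (hy' : y' ∈ Icc (0 : ℝ) 1) :
    |f y - f x| * |y' - x'| ≤ Real.exp c * (|f y' - f x'| * |y - x|) := by
  rw [← uIcc_of_le zero_le_one] at hx hy hx' hy'
  simpa using hf (left_mem_Icc.2 zero_le_one) (right_mem_Icc.2 zero_le_one) hx hy hx' hy'

end SecantDistortionOn

theorem exists_mem_uIcc_sub_eq_deriv_mul {f f' : ℝ → ℝ} {x y : ℝ}
    (hf : ∀ z ∈ uIcc x y, HasDerivAt f (f' z) z) :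
    ∃ z ∈ uIcc x y, f y - f x = f' z * (y - x) := by
  wlog hxy : x < y generalizing x y
  · rcases eq_or_lt_of_le (not_lt.1 hxy) with rfl | hyx
    · exact ⟨y, left_mem_uIcc, by simp⟩
    · obtain ⟨z, hz, hslope⟩ := this (by rwa [uIcc_comm]) hyx
      exact ⟨z, by rwa [uIcc_comm], by linarith⟩
  rw [uIcc_of_le hxy.le] at hf ⊢
  obtain ⟨z, hz, hslope⟩ := exists_hasDerivAt_eq_slope f f' hxy
    (fun z hz => (hf z hz).continuousAt.continuousWithinAt)
    (fun z hz => hf z (Ioo_subset_Icc_self hz))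
  exact ⟨z, Ioo_subset_Icc_self hz, by rw [hslope, div_mul_cancel₀ _ (sub_ne_zero.2 hxy.ne')]⟩

theorem abs_deriv_le_exp_mul_abs_deriv {f' f'' : ℝ → ℝ} {s : Set ℝ} {c : ℝ≥0} (hs : Convex ℝ s)
    (hf' : ∀ z ∈ s, HasDerivAt f' (f'' z) z) (hne : ∀ z ∈ s, f' z ≠ 0)
    (hc : ∀ z ∈ s, |f'' z / f' z| ≤ c) {x y : ℝ} (hx : x ∈ s) (hy : y ∈ s) :
    |f' y| ≤ Real.exp (c * |y - x|) * |f' x| := by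
  have hlog := hs.norm_image_sub_le_of_norm_hasDerivWithin_le (f := fun z => Real.log (f' z))
    (f' := fun z => f'' z / f' z) (C := c)
    (fun z hz => ((hf' z hz).log (hne z hz)).hasDerivWithinAt) hc hx hy
  rw [← Real.exp_log_eq_abs (hne x hx), ← Real.exp_log_eq_abs (hne y hy), ← Real.exp_add,
    Real.exp_le_exp]
  rw [Real.norm_eq_abs, Real.norm_eq_abs] at hlog
  linarith [le_of_abs_le hlog]

theorem secantDistortionOn_of_hasDerivAt {f f' f'' : ℝ → ℝ} {s : Set ℝ} {c : ℝ≥0}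
    (hs : Convex ℝ s) (hf : ∀ z ∈ s, HasDerivAt f (f' z) z)
    (hf' : ∀ z ∈ s, HasDerivAt f' (f'' z) z) (hne : ∀ z ∈ s, f' z ≠ 0)
    (hc : ∀ z ∈ s, |f'' z / f' z| ≤ c) : SecantDistortionOn c f s := by
  intro p hp q hq x hx y hy x' hx' y' hy'
  have hsub := hs.ordConnected.uIcc_subset hp hq
  have hxy := uIcc_subset_uIcc hx hy
  have hxy' := uIcc_subset_uIcc hx' hy'
  obtain ⟨z, hz, hslope⟩ :=
    exists_mem_uIcc_sub_eq_deriv_mul fun z hz => hf z (hsub (hxy hz))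
  obtain ⟨z', hz', hslope'⟩ :=
    exists_mem_uIcc_sub_eq_deriv_mul fun z hz => hf z (hsub (hxy' hz))
  have hdist : |z - z'| ≤ |p - q| := by
    rw [abs_sub_comm p q]
    exact abs_sub_le_of_uIcc_subset_uIcc (uIcc_subset_uIcc (hxy' hz') (hxy hz))
  have hderiv : |f' z| ≤ Real.exp (c * |p - q|) * |f' z'| :=
    (abs_deriv_le_exp_mul_abs_deriv hs hf' hne hc (hsub (hxy' hz')) (hsub (hxy hz))).trans
      (by gcongr)
  rw [hslope, hslope', abs_mul, abs_mul]
  calc |f' z| * |y - x| * |y' - x'|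
      ≤ (Real.exp (c * |p - q|) * |f' z'|) * |y - x| * |y' - x'| := by gcongr
    _ = Real.exp (c * |p - q|) * (|f' z'| * |y' - x'| * |y - x|) := by ring

/-! ### Elementary inequalities and limits -/

theorem sum_rpow_le_card_rpow_mul_rpow_sum {ι : Type*} (s : Finset ι) {f : ι → ℝ}
    (hf : ∀ i ∈ s, 0 ≤ f i) {h : ℝ} (hpos : 0 < h) (hle : h ≤ 1) :
    ∑ i ∈ s, f i ^ h ≤ (s.card : ℝ) ^ (1 - h) * (∑ i ∈ s, f i) ^ h := by
  have hjensen := Real.rpow_sum_le_const_mul_sum_rpow_of_nonneg s (p := 1 / h)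
    ((one_le_div hpos).2 hle) fun i hi => Real.rpow_nonneg (hf i hi) h
  have hcancel : ∑ i ∈ s, (f i ^ h) ^ (1 / h) = ∑ i ∈ s, f i :=
    Finset.sum_congr rfl fun i hi => by
      rw [← Real.rpow_mul (hf i hi), mul_one_div_cancel hpos.ne', Real.rpow_one]
  have hsum : 0 ≤ ∑ i ∈ s, f i ^ h := Finset.sum_nonneg fun i hi => Real.rpow_nonneg (hf i hi) h
  rw [hcancel] at hjensen
  calc ∑ i ∈ s, f i ^ h = ((∑ i ∈ s, f i ^ h) ^ (1 / h)) ^ h := by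
        rw [← Real.rpow_mul hsum, one_div_mul_cancel hpos.ne', Real.rpow_one]
    _ ≤ ((s.card : ℝ) ^ (1 / h - 1) * ∑ i ∈ s, f i) ^ h :=
        Real.rpow_le_rpow (by positivity) hjensen hpos.le
    _ = (s.card : ℝ) ^ (1 - h) * (∑ i ∈ s, f i) ^ h := by
        rw [Real.mul_rpow (by positivity) (Finset.sum_nonneg hf), ← Real.rpow_mul (by positivity),
          sub_mul, one_div_mul_cancel hpos.ne', one_mul]

-- An unbounded supremum is `0` by convention, so a nonzero limit forces boundedness.
theorem tendsto_of_tendsto_iSup_Ici_of_le {u : ℕ → ℝ} {a : ℝ} (ha : a ≠ 0) (hu : ∀ n, a ≤ u n)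
    (h : Tendsto (fun n => ⨆ k ∈ Ici n, u k) atTop (𝓝 a)) :
    Tendsto u atTop (𝓝 a) := by
  refine tendsto_of_tendsto_of_tendsto_of_le_of_le' tendsto_const_nhds h (.of_forall hu) ?_
  filter_upwards [h.eventually_ne ha] with n hn
  have hbdd : BddAbove (range fun k => ⨆ _ : k ∈ Ici n, u k) := by
    by_contra hunbdd
    exact hn (Real.iSup_of_not_bddAbove hunbdd)
  have hle := le_ciSup hbdd n
  rwa [ciSup_pos (mem_Ici.2 le_rfl)] at hle

theorem exists_pos_one_add_pow_le (N : ℕ) {ε : ℝ} (hε : 0 < ε) :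
    ∃ η : ℝ, 0 < η ∧ (1 + η) ^ N ≤ 1 + ε := by
  have hcont : Continuous fun η : ℝ => (1 + η) ^ N := by fun_prop
  have hlim : Tendsto (fun η : ℝ => (1 + η) ^ N) (𝓝[>] 0) (𝓝 ((1 + 0) ^ N)) :=
    tendsto_nhdsWithin_of_tendsto_nhds hcont.continuousAt
  have hlt := hlim.eventually_lt_const (by simpa using hε : ((1 : ℝ) + 0) ^ N < 1 + ε)
  obtain ⟨η, hη, hpos⟩ := (hlt.and self_mem_nhdsWithin).exists
  exact ⟨η, hpos, hη.le⟩

theorem one_add_mul_mul_rpow_le {ε η h T x y : ℝ} (hη : 0 ≤ η) (hηε : (1 + η) ^ 3 ≤ 1 + ε)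
    (hT : T ≤ 1 + η) (hpos : 0 < h) (hle : h ≤ 1) (hx : 0 ≤ x) (hy : 0 ≤ y)
    (hxy : x ≤ (1 + η) * y) : (1 + η) * (T * x ^ h) ≤ (1 + ε) * y ^ h := by
  have hrpow : x ^ h ≤ (1 + η) * y ^ h := calc
    x ^ h ≤ ((1 + η) * y) ^ h := by gcongr
    _ = (1 + η) ^ h * y ^ h := Real.mul_rpow (by positivity) hy
    _ ≤ (1 + η) * y ^ h := by
      gcongr
      exact Real.rpow_le_self_of_one_le (by linarith) hle
  calc (1 + η) * (T * x ^ h) ≤ (1 + η) * ((1 + η) * ((1 + η) * y ^ h)) := by gcongr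
    _ = (1 + η) ^ 3 * y ^ h := by ring
    _ ≤ (1 + ε) * y ^ h := by gcongr

/-! ### Words and limit sets -/

/-- `w` is a word over the alphabet `{1, …, n}`. -/
def IsWord (n : ℕ) (w : List ℕ) : Prop := ∀ i ∈ w, 1 ≤ i ∧ i ≤ n

/-- The finite set of words of length `l` over the alphabet `{1, …, n}`. -/
def wordsOfLength (n : ℕ) : ℕ → Finset (List ℕ)
  | 0 => {[]}
  | l + 1 => Finset.image₂ List.cons (Finset.Icc 1 n) (wordsOfLength n l)

section Words

theorem injective2_cons {α : Type*} : Function.Injective2 (List.cons (α := α)) :=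
  fun _ _ _ _ => List.cons.inj

variable {n l k : ℕ} {u w : List ℕ}

theorem isWord_nil : IsWord n [] := fun _ hi => absurd hi List.not_mem_nil

theorem isWord_cons : IsWord n (k :: w) ↔ (1 ≤ k ∧ k ≤ n) ∧ IsWord n w := List.forall_mem_cons

theorem isWord_singleton (hk : k ∈ Finset.Icc 1 n) : IsWord n [k] :=
  isWord_cons.2 ⟨Finset.mem_Icc.1 hk, isWord_nil⟩

theorem IsWord.append (hu : IsWord n u) (hw : IsWord n w) : IsWord n (u ++ w) :=
  List.forall_mem_append.2 ⟨hu, hw⟩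

theorem mem_wordsOfLength : w ∈ wordsOfLength n l ↔ w.length = l ∧ IsWord n w := by
  induction l generalizing w with
  | zero =>
    simp only [wordsOfLength, Finset.mem_singleton, List.length_eq_zero_iff]
    exact ⟨fun hw => ⟨hw, hw ▸ isWord_nil⟩, And.left⟩
  | succ l ih =>
    cases w <;> simp [wordsOfLength, Finset.mem_image₂, ih, isWord_cons, and_left_comm]

theorem card_wordsOfLength : (wordsOfLength n l).card = n ^ l := by
  induction l with
  | zero => rfl
  | succ l ih =>
    rw [wordsOfLength, Finset.card_image₂ injective2_cons, ih, Nat.card_Icc,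
      Nat.add_sub_cancel, pow_succ']

theorem sum_wordsOfLength_succ (f : List ℕ → ℝ) :
    ∑ u ∈ wordsOfLength n (l + 1), f u =
      ∑ k ∈ Finset.Icc 1 n, ∑ u ∈ wordsOfLength n l, f (k :: u) := by
  rw [wordsOfLength, Finset.image₂, Finset.sum_image injective2_cons.uncurry.injOn,
    Finset.sum_product]
  rfl

theorem wordsOfLength_mono {m : ℕ} (hmn : m ≤ n) : wordsOfLength m l ⊆ wordsOfLength n l := by
  intro w hw
  rw [mem_wordsOfLength] at hw ⊢
  exact ⟨hw.1, fun i hi => ⟨(hw.2 i hi).1, (hw.2 i hi).2.trans hmn⟩⟩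

theorem wordComp_append (g : ℕ → ℝ → ℝ) (u w : List ℕ) (x : ℝ) :
    wordComp g (u ++ w) x = wordComp g u (wordComp g w x) := by
  induction u with
  | nil => rfl
  | cons k u ih => simp only [List.cons_append, wordComp, Function.comp_apply, ih]

theorem image_wordComp_append (g : ℕ → ℝ → ℝ) (u w : List ℕ) (A : Set ℝ) :
    wordComp g (u ++ w) '' A = wordComp g u '' (wordComp g w '' A) := by
  simp only [image_image, wordComp_append]

end Words

/-- The `l`-th approximation of the limit set: the union of the cylinders of words of length `l`. -/
def cylinderUnion (g : ℕ → ℝ → ℝ) (n l : ℕ) : Set ℝ :=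
  ⋃ w ∈ wordsOfLength n l, wordComp g w '' Icc 0 1

section LimitSet

variable {g : ℕ → ℝ → ℝ} {n l : ℕ} {w : List ℕ}

theorem wordComp_mapsTo (hmaps : ∀ k, 1 ≤ k → MapsTo (g k) (Icc 0 1) (Icc 0 1))
    (hw : IsWord n w) : MapsTo (wordComp g w) (Icc 0 1) (Icc 0 1) := by
  induction w with
  | nil => exact mapsTo_id _
  | cons k w ih =>
    obtain ⟨hk, hw⟩ := isWord_cons.1 hw
    exact (hmaps k hk.1).comp (ih hw)

theorem wordComp_injOn (hmaps : ∀ k, 1 ≤ k → MapsTo (g k) (Icc 0 1) (Icc 0 1))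
    (hinj : ∀ k, 1 ≤ k → InjOn (g k) (Icc 0 1)) (hw : IsWord n w) :
    InjOn (wordComp g w) (Icc 0 1) := by
  induction w with
  | nil => exact injOn_id _
  | cons k w ih =>
    obtain ⟨hk, hw⟩ := isWord_cons.1 hw
    exact (hinj k hk.1).comp (ih hw) (wordComp_mapsTo hmaps hw)

theorem wordComp_monotoneOrAntitoneOn
    (hmaps : ∀ k, 1 ≤ k → MapsTo (g k) (Icc 0 1) (Icc 0 1))
    (hmono : ∀ k, 1 ≤ k → MonotoneOrAntitoneOn (g k) (Icc 0 1)) (hw : IsWord n w) :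
    MonotoneOrAntitoneOn (wordComp g w) (Icc 0 1) := by
  induction w with
  | nil => exact .inl (monotone_id.monotoneOn _)
  | cons k w ih =>
    obtain ⟨hk, hw⟩ := isWord_cons.1 hw
    exact (hmono k hk.1).comp (ih hw) (wordComp_mapsTo hmaps hw)

theorem wordComp_lipschitzOnWith {α : ℝ≥0}
    (hmaps : ∀ k, 1 ≤ k → MapsTo (g k) (Icc 0 1) (Icc 0 1))
    (hlip : ∀ k, 1 ≤ k → LipschitzOnWith α (g k) (Icc 0 1)) (hw : IsWord n w) :
    LipschitzOnWith (α ^ w.length) (wordComp g w) (Icc 0 1) := by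
  induction w with
  | nil => exact LipschitzWith.id.lipschitzOnWith
  | cons k w ih =>
    obtain ⟨hk, hw⟩ := isWord_cons.1 hw
    rw [List.length_cons, pow_succ']
    exact (hlip k hk.1).comp (ih hw) (wordComp_mapsTo hmaps hw)

theorem cylinderUnion_succ :
    cylinderUnion g n (l + 1) = ⋃ k ∈ Finset.Icc 1 n, g k '' cylinderUnion g n l := by
  ext x
  simp only [cylinderUnion, wordsOfLength, Finset.mem_image₂, mem_iUnion, mem_image, exists_prop]
  constructor
  · rintro ⟨_, ⟨k, hk, u, hu, rfl⟩, y, hy, rfl⟩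
    exact ⟨k, hk, _, ⟨u, hu, y, hy, rfl⟩, rfl⟩
  · rintro ⟨k, hk, _, ⟨u, hu, y, hy, rfl⟩, rfl⟩
    exact ⟨k :: u, ⟨k, hk, u, hu, rfl⟩, y, hy, rfl⟩

theorem cylinderUnion_zero : cylinderUnion g n 0 = Icc 0 1 := by
  simp [cylinderUnion, wordsOfLength, wordComp]

theorem cylinderUnion_subset_Icc (hmaps : ∀ k, 1 ≤ k → MapsTo (g k) (Icc 0 1) (Icc 0 1)) :
    cylinderUnion g n l ⊆ Icc 0 1 :=
  iUnion₂_subset fun _ hw => (wordComp_mapsTo hmaps (mem_wordsOfLength.1 hw).2).image_subset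

theorem antitone_cylinderUnion (hmaps : ∀ k, 1 ≤ k → MapsTo (g k) (Icc 0 1) (Icc 0 1)) :
    Antitone (cylinderUnion g n) := by
  refine antitone_nat_of_succ_le fun l => ?_
  induction l with
  | zero =>
    rw [cylinderUnion_zero]
    exact cylinderUnion_subset_Icc hmaps
  | succ l ih =>
    rw [cylinderUnion_succ (l := l), cylinderUnion_succ (l := l + 1)]
    exact iUnion₂_mono fun k _ => image_mono ih

theorem limitSet_eq_iInter_cylinderUnion
    (hmaps : ∀ k, 1 ≤ k → MapsTo (g k) (Icc 0 1) (Icc 0 1)) :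
    limitSet g n = ⋂ l, cylinderUnion g n l := by
  rw [← (antitone_cylinderUnion hmaps).iInter_nat_add 1]
  ext x
  simp only [limitSet, cylinderUnion, mem_iInter, mem_iUnion, exists_prop, mem_wordsOfLength,
    mem_ofPred_eq]
  rfl

theorem limitSet_subset_Icc (hmaps : ∀ k, 1 ≤ k → MapsTo (g k) (Icc 0 1) (Icc 0 1)) :
    limitSet g n ⊆ Icc 0 1 := by
  rw [limitSet_eq_iInter_cylinderUnion hmaps]
  exact (iInter_subset _ 0).trans (cylinderUnion_subset_Icc hmaps)

theorem isCompact_limitSet (hmaps : ∀ k, 1 ≤ k → MapsTo (g k) (Icc 0 1) (Icc 0 1))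
    (hcont : ∀ k, 1 ≤ k → ContinuousOn (g k) (Icc 0 1)) : IsCompact (limitSet g n) := by
  have hlevel : ∀ l, IsCompact (cylinderUnion g n l) := by
    intro l
    induction l with
    | zero => rw [cylinderUnion_zero]; exact isCompact_Icc
    | succ l ih =>
      rw [cylinderUnion_succ]
      exact (Finset.Icc 1 n).isCompact_biUnion fun k hk => ih.image_of_continuousOn <|
        (hcont k (Finset.mem_Icc.1 hk).1).mono (cylinderUnion_subset_Icc hmaps)
  rw [limitSet_eq_iInter_cylinderUnion hmaps]
  exact (hlevel 0).of_isClosed_subset (isClosed_iInter fun l => (hlevel l).isClosed)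
    (iInter_subset _ 0)

-- Injectivity of `g k` lets its image commute with the intersection over levels.
theorem limitSet_eq_biUnion_image (hmaps : ∀ k, 1 ≤ k → MapsTo (g k) (Icc 0 1) (Icc 0 1))
    (hinj : ∀ k, 1 ≤ k → InjOn (g k) (Icc 0 1)) :
    limitSet g n = ⋃ k ∈ Finset.Icc 1 n, g k '' limitSet g n := by
  have hanti := antitone_cylinderUnion (n := n) hmaps
  have himage : ∀ k ∈ Finset.Icc 1 n, g k '' limitSet g n = ⋂ l, g k '' cylinderUnion g n l := by
    intro k hk
    rw [limitSet_eq_iInter_cylinderUnion hmaps, InjOn.image_iInter_eq]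
    exact (hinj k (Finset.mem_Icc.1 hk).1).mono
      (iUnion_subset fun l => cylinderUnion_subset_Icc hmaps)
  rw [iUnion₂_congr himage, limitSet_eq_iInter_cylinderUnion hmaps,
    ← (antitone_cylinderUnion hmaps).iInter_nat_add 1]
  simp only [cylinderUnion_succ, ← Finset.mem_coe, biUnion_eq_iUnion]
  exact iInter_iUnion_of_antitone fun k _ _ hlm => image_mono (hanti hlm)

theorem wordComp_mapsTo_limitSet (hmaps : ∀ k, 1 ≤ k → MapsTo (g k) (Icc 0 1) (Icc 0 1))
    (hinj : ∀ k, 1 ≤ k → InjOn (g k) (Icc 0 1)) (hw : IsWord n w) :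
    MapsTo (wordComp g w) (limitSet g n) (limitSet g n) := by
  induction w with
  | nil => exact mapsTo_id _
  | cons k w ih =>
    obtain ⟨hk, hw⟩ := isWord_cons.1 hw
    intro x hx
    rw [limitSet_eq_biUnion_image hmaps hinj]
    exact mem_biUnion (Finset.mem_Icc.2 hk) (mem_image_of_mem _ (ih hw hx))

theorem limitSet_eq_biUnion_image_wordComp
    (hmaps : ∀ k, 1 ≤ k → MapsTo (g k) (Icc 0 1) (Icc 0 1))
    (hinj : ∀ k, 1 ≤ k → InjOn (g k) (Icc 0 1)) (l : ℕ) :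
    limitSet g n = ⋃ u ∈ wordsOfLength n l, wordComp g u '' limitSet g n := by
  refine subset_antisymm (fun x hx => ?_) <| iUnion₂_subset fun u hu =>
    (wordComp_mapsTo_limitSet hmaps hinj (mem_wordsOfLength.1 hu).2).image_subset
  simp only [mem_iUnion, exists_prop]
  induction l generalizing x with
  | zero => exact ⟨[], Finset.mem_singleton_self _, x, hx, rfl⟩
  | succ l ih =>
    rw [limitSet_eq_biUnion_image hmaps hinj] at hx
    simp only [mem_iUnion, exists_prop] at hx
    obtain ⟨k, hk, y, hy, rfl⟩ := hx
    obtain ⟨u, hu, z, hz, rfl⟩ := ih y hy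
    exact ⟨k :: u, Finset.mem_image₂_of_mem hk hu, z, hz, rfl⟩

end LimitSet

/-! ### Decreasing iterated function systems -/

/-- The first-order data behind the nonlinear setting: decreasing contractions `g k` of `[0,1]`
onto consecutive intervals `[b k, b (k - 1)]` accumulating at `0`, with uniformly bounded
distortion. The maps `g k` are indexed by `k ≥ 1`; `g 0` is unconstrained. -/
structure DecreasingIFS where
  b : ℕ → ℝ
  g : ℕ → ℝ → ℝ
  α : ℝ≥0
  c : ℝ≥0
  b_zero : b 0 = 1
  b_lim : Tendsto b atTop (𝓝 0)
  b_ratio : Tendsto (fun k => b k / b (k + 1)) atTop (𝓝 1)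
  g_anti : ∀ k, 1 ≤ k → StrictAntiOn (g k) (Icc 0 1)
  g_zero : ∀ k, 1 ≤ k → g k 0 = b (k - 1)
  g_one : ∀ k, 1 ≤ k → g k 1 = b k
  α_lt_one : α < 1
  g_lipschitz : ∀ k, 1 ≤ k → LipschitzOnWith α (g k) (Icc 0 1)
  g_distortion : ∀ k, 1 ≤ k → SecantDistortionOn c (g k) (Icc 0 1)

namespace DecreasingIFS

variable (S : DecreasingIFS) {n l k : ℕ} {u v w : List ℕ}

theorem b_strictAnti : StrictAnti S.b := by
  refine strictAnti_nat_of_succ_lt fun k => ?_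
  have hlt := S.g_anti (k + 1) k.succ_pos unitInterval.zero_mem unitInterval.one_mem zero_lt_one
  rwa [S.g_one _ k.succ_pos, S.g_zero _ k.succ_pos, Nat.succ_sub_one] at hlt

theorem b_pos (k : ℕ) : 0 < S.b k :=
  (S.b_strictAnti.antitone.le_of_tendsto S.b_lim (k + 1)).trans_lt (S.b_strictAnti k.lt_succ_self)

theorem b_le_one (k : ℕ) : S.b k ≤ 1 := S.b_zero ▸ S.b_strictAnti.antitone k.zero_le

theorem b_mem_Icc (k : ℕ) : S.b k ∈ Icc (0 : ℝ) 1 := ⟨(S.b_pos k).le, S.b_le_one k⟩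

theorem mapsTo_g_Icc_b (hk : 1 ≤ k) : MapsTo (S.g k) (Icc 0 1) (Icc (S.b k) (S.b (k - 1))) := by
  rw [← S.g_one k hk, ← S.g_zero k hk]
  exact (S.g_anti k hk).antitoneOn.mapsTo_Icc

theorem mapsTo_g (k : ℕ) (hk : 1 ≤ k) : MapsTo (S.g k) (Icc 0 1) (Icc 0 1) :=
  (S.mapsTo_g_Icc_b hk).mono_right (Icc_subset_Icc (S.b_pos k).le (S.b_le_one _))

theorem continuousOn_g (k : ℕ) (hk : 1 ≤ k) : ContinuousOn (S.g k) (Icc 0 1) :=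
  (S.g_lipschitz k hk).continuousOn

theorem injOn_g (k : ℕ) (hk : 1 ≤ k) : InjOn (S.g k) (Icc 0 1) := (S.g_anti k hk).injOn

theorem exists_g_eq (hk : 1 ≤ k) {y : ℝ} (hy : y ∈ Icc (S.b k) (S.b (k - 1))) :
    ∃ x ∈ Icc (0 : ℝ) 1, S.g k x = y := by
  rw [← S.g_one k hk, ← S.g_zero k hk] at hy
  exact intermediate_value_Icc' zero_le_one (S.continuousOn_g k hk) hy

theorem mapsTo_wordComp (hw : IsWord n w) : MapsTo (wordComp S.g w) (Icc 0 1) (Icc 0 1) :=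
  wordComp_mapsTo S.mapsTo_g hw

theorem injOn_wordComp (hw : IsWord n w) : InjOn (wordComp S.g w) (Icc 0 1) :=
  wordComp_injOn S.mapsTo_g S.injOn_g hw

theorem monotoneOrAntitoneOn_wordComp (hw : IsWord n w) :
    MonotoneOrAntitoneOn (wordComp S.g w) (Icc 0 1) :=
  wordComp_monotoneOrAntitoneOn S.mapsTo_g (fun k hk => .inr (S.g_anti k hk).antitoneOn) hw

theorem lipschitzOnWith_wordComp (hw : IsWord n w) :
    LipschitzOnWith (S.α ^ w.length) (wordComp S.g w) (Icc 0 1) :=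
  wordComp_lipschitzOnWith S.mapsTo_g S.g_lipschitz hw

theorem continuousOn_wordComp (hw : IsWord n w) : ContinuousOn (wordComp S.g w) (Icc 0 1) :=
  (S.lipschitzOnWith_wordComp hw).continuousOn

theorem limitSet_subset : limitSet S.g n ⊆ Icc 0 1 := limitSet_subset_Icc S.mapsTo_g

theorem mapsTo_wordComp_limitSet (hw : IsWord n w) :
    MapsTo (wordComp S.g w) (limitSet S.g n) (limitSet S.g n) :=
  wordComp_mapsTo_limitSet S.mapsTo_g S.injOn_g hw

theorem abs_wordComp_sub_le (hw : IsWord n w) {x y : ℝ} (hx : x ∈ Icc (0 : ℝ) 1)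
    (hy : y ∈ Icc (0 : ℝ) 1) : |wordComp S.g w x - wordComp S.g w y| ≤ S.α ^ w.length := by
  have hlip := (S.lipschitzOnWith_wordComp hw).dist_le_mul x hx y hy
  have hdist : |x - y| ≤ 1 := Real.dist_le_of_mem_Icc_01 hx hy
  rw [Real.dist_eq, Real.dist_eq, NNReal.coe_pow] at hlip
  exact hlip.trans (mul_le_of_le_one_right (by positivity) hdist)

/-- A distortion constant valid for all compositions of the maps `g k` simultaneously: the sum of
the geometric series of distortions picked up along a word. -/
def distortionConst : ℝ≥0 := S.c / (1 - S.α)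

theorem secantDistortionOn_wordComp (hw : IsWord n w) :
    SecantDistortionOn S.distortionConst (wordComp S.g w) (Icc 0 1) := by
  have hgeom : SecantDistortionOn (∑ i ∈ Finset.range w.length, S.c * S.α ^ i)
      (wordComp S.g w) (Icc 0 1) := by
    induction w with
    | nil => exact SecantDistortionOn.id
    | cons k w ih =>
      obtain ⟨hk, hw⟩ := isWord_cons.1 hw
      rw [List.length_cons, Finset.sum_range_succ, add_comm]
      exact (S.g_distortion k hk.1).comp (ih hw) ordConnected_Icc
        (S.monotoneOrAntitoneOn_wordComp hw) (S.injOn_wordComp hw)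
        (S.lipschitzOnWith_wordComp hw) (S.mapsTo_wordComp hw)
  refine hgeom.weaken ?_
  rw [← Finset.mul_sum, distortionConst, div_eq_mul_inv, ← NNReal.tsum_geometric S.α_lt_one]
  gcongr
  exact (NNReal.summable_geometric S.α_lt_one).sum_le_tsum _ fun _ _ => zero_le

/-- The length of the cylinder `wordComp S.g w '' [0,1]`. -/
def cylinderLength (w : List ℕ) : ℝ := |wordComp S.g w 1 - wordComp S.g w 0|

theorem cylinderLength_nil : S.cylinderLength [] = 1 := by simp [cylinderLength, wordComp]

theorem cylinderLength_nonneg (w : List ℕ) : 0 ≤ S.cylinderLength w := abs_nonneg _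

theorem cylinderLength_pos (hw : IsWord n w) : 0 < S.cylinderLength w :=
  abs_pos.2 <| sub_ne_zero.2 <|
    (S.injOn_wordComp hw).ne unitInterval.one_mem unitInterval.zero_mem one_ne_zero

theorem cylinderLength_le_pow (hw : IsWord n w) : S.cylinderLength w ≤ S.α ^ w.length :=
  S.abs_wordComp_sub_le hw unitInterval.one_mem unitInterval.zero_mem

theorem cylinderLength_le_one (hw : IsWord n w) : S.cylinderLength w ≤ 1 :=
  (S.cylinderLength_le_pow hw).trans (pow_le_one₀ S.α.2 S.α_lt_one.le)

theorem cylinderLength_mul_le (hw : IsWord n w) (hv : IsWord n v) :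
    S.cylinderLength w * S.cylinderLength v ≤
      Real.exp S.distortionConst * S.cylinderLength (w ++ v) := by
  have hdist := (S.secantDistortionOn_wordComp hw).of_Icc unitInterval.zero_mem
    unitInterval.one_mem (S.mapsTo_wordComp hv unitInterval.zero_mem)
    (S.mapsTo_wordComp hv unitInterval.one_mem)
  simpa only [cylinderLength, wordComp_append, sub_zero, abs_one, mul_one] using hdist

theorem sum_abs_sub_b {F : ℝ → ℝ} (hF : MonotoneOrAntitoneOn F (Icc 0 1)) (n : ℕ) :
    ∑ k ∈ Finset.Icc 1 n, |F (S.b k) - F (S.b (k - 1))| = |F 1 - F (S.b n)| := by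
  induction n with
  | zero => simp [S.b_zero]
  | succ n ih =>
    have hmem : S.b n ∈ uIcc 1 (S.b (n + 1)) := by
      rw [uIcc_of_ge (S.b_le_one _)]
      exact ⟨S.b_strictAnti.antitone n.le_succ, S.b_le_one n⟩
    rw [Finset.sum_Icc_succ_top (by lia), ih, Nat.add_sub_cancel,
      abs_sub_comm (F (S.b (n + 1))),
      hF.abs_sub_add_abs_sub ordConnected_Icc unitInterval.one_mem (S.b_mem_Icc _) hmem]

theorem sum_abs_sub_wordComp_le {F : ℝ → ℝ} (hF : MonotoneOrAntitoneOn F (Icc 0 1))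
    (n l : ℕ) :
    ∑ u ∈ wordsOfLength n l, |F (wordComp S.g u 1) - F (wordComp S.g u 0)| ≤ |F 1 - F 0| := by
  induction l generalizing F with
  | zero => simp [wordsOfLength, wordComp]
  | succ l ih =>
    rw [sum_wordsOfLength_succ]
    calc ∑ k ∈ Finset.Icc 1 n, ∑ u ∈ wordsOfLength n l,
          |F (S.g k (wordComp S.g u 1)) - F (S.g k (wordComp S.g u 0))|
        ≤ ∑ k ∈ Finset.Icc 1 n, |F (S.b k) - F (S.b (k - 1))| := by
          refine Finset.sum_le_sum fun k hk => ?_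
          have hk := (Finset.mem_Icc.1 hk).1
          simpa only [Function.comp_apply, S.g_zero k hk, S.g_one k hk] using
            ih (hF.comp (.inr (S.g_anti k hk).antitoneOn) (S.mapsTo_g k hk))
      _ = |F 1 - F (S.b n)| := S.sum_abs_sub_b hF n
      _ ≤ |F 1 - F 0| := by
          refine hF.abs_sub_le_of_uIcc_subset ordConnected_Icc unitInterval.zero_mem
            unitInterval.one_mem (uIcc_subset_uIcc ?_ right_mem_uIcc)
          rw [uIcc_of_le zero_le_one]
          exact S.b_mem_Icc n

theorem sum_rpow_abs_sub_wordComp_le {F : ℝ → ℝ} (hF : MonotoneOrAntitoneOn F (Icc 0 1)) {h : ℝ}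
    (hpos : 0 < h) (hle : h ≤ 1) (n l : ℕ) :
    ∑ u ∈ wordsOfLength n l, |F (wordComp S.g u 1) - F (wordComp S.g u 0)| ^ h ≤
      ((n : ℝ) ^ l) ^ (1 - h) * |F 1 - F 0| ^ h := by
  refine (sum_rpow_le_card_rpow_mul_rpow_sum _ (fun _ _ => abs_nonneg _) hpos hle).trans ?_
  rw [card_wordsOfLength, Nat.cast_pow]
  gcongr
  exact S.sum_abs_sub_wordComp_le hF n l

theorem sum_cylinderLength_append_rpow_le {h : ℝ} (hpos : 0 < h) (hle : h ≤ 1) (hw : IsWord n w)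
    (l : ℕ) : ∑ u ∈ wordsOfLength n l, S.cylinderLength (w ++ u) ^ h ≤
      ((n : ℝ) ^ l) ^ (1 - h) * S.cylinderLength w ^ h := by
  simpa only [cylinderLength, wordComp_append] using
    S.sum_rpow_abs_sub_wordComp_le (S.monotoneOrAntitoneOn_wordComp hw) hpos hle n l

theorem one_sub_mul_cylinderLength_le_sum_children (hw : IsWord n w) :
    (1 - Real.exp S.distortionConst * S.b n) * S.cylinderLength w ≤
      ∑ k ∈ Finset.Icc 1 n, S.cylinderLength (w ++ [k]) := by
  have hchildren : ∑ k ∈ Finset.Icc 1 n, S.cylinderLength (w ++ [k]) =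
      |wordComp S.g w 1 - wordComp S.g w (S.b n)| := by
    rw [← S.sum_abs_sub_b (S.monotoneOrAntitoneOn_wordComp hw) n]
    refine Finset.sum_congr rfl fun k hk => ?_
    have hk := (Finset.mem_Icc.1 hk).1
    simp only [cylinderLength, wordComp_append, wordComp, Function.comp_apply, id_eq,
      S.g_zero k hk, S.g_one k hk]
  have htail := (S.secantDistortionOn_wordComp hw).of_Icc unitInterval.zero_mem (S.b_mem_Icc n)
    unitInterval.zero_mem unitInterval.one_mem
  have hsplit : S.cylinderLength w ≤ |wordComp S.g w 1 - wordComp S.g w (S.b n)| +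
      |wordComp S.g w (S.b n) - wordComp S.g w 0| := abs_sub_le _ _ _
  simp only [sub_zero, abs_one, mul_one, abs_of_pos (S.b_pos n)] at htail
  rw [← cylinderLength] at htail
  rw [hchildren]
  linarith

theorem one_sub_pow_mul_cylinderLength_le_sum (hw : IsWord n w)
    (hn : Real.exp S.distortionConst * S.b n ≤ 1) (l : ℕ) :
    (1 - Real.exp S.distortionConst * S.b n) ^ l * S.cylinderLength w ≤
      ∑ v ∈ wordsOfLength n l, S.cylinderLength (w ++ v) := by
  induction l generalizing w with
  | zero => simp [wordsOfLength]
  | succ l ih =>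
    have _ := sub_nonneg.2 hn
    rw [sum_wordsOfLength_succ, pow_succ, mul_assoc]
    calc _ ≤ (1 - Real.exp S.distortionConst * S.b n) ^ l *
          ∑ k ∈ Finset.Icc 1 n, S.cylinderLength (w ++ [k]) := by
          gcongr
          exact S.one_sub_mul_cylinderLength_le_sum_children hw
      _ ≤ ∑ k ∈ Finset.Icc 1 n, ∑ v ∈ wordsOfLength n l, S.cylinderLength (w ++ k :: v) := by
          rw [Finset.mul_sum]
          refine Finset.sum_le_sum fun k hk => ?_
          simpa only [List.append_assoc, List.singleton_append] using
            ih (hw.append (isWord_singleton hk))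

theorem tendsto_sum_cylinderLength (l : ℕ) :
    Tendsto (fun N => ∑ v ∈ wordsOfLength N l, S.cylinderLength v) atTop (𝓝 1) := by
  have htail : Tendsto (fun N => Real.exp S.distortionConst * S.b N) atTop (𝓝 0) := by
    simpa using S.b_lim.const_mul (Real.exp S.distortionConst)
  have hlower : Tendsto (fun N => (1 - Real.exp S.distortionConst * S.b N) ^ l) atTop (𝓝 1) := by
    simpa using (htail.const_sub 1).pow l
  refine tendsto_of_tendsto_of_tendsto_of_le_of_le' hlower tendsto_const_nhds ?_ (.of_forall ?_)
  · filter_upwards [htail.eventually_le_const zero_lt_one] with N hN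
    simpa only [cylinderLength_nil, mul_one, List.nil_append] using
      S.one_sub_pow_mul_cylinderLength_le_sum isWord_nil hN l
  · intro N
    simpa only [cylinderLength, id_eq, sub_zero, abs_one] using
      S.sum_abs_sub_wordComp_le (.inl (monotone_id.monotoneOn _)) N l

/-! ### Subconformal measures -/

/-- The features of the normalized `h`-dimensional Hausdorff measure on `limitSet S.g n` that the
density estimates use: an atomless probability measure on the limit set which a composition of the
maps, where it is `C`-Lipschitz, increases by at most the factor `C ^ h`. -/
structure IsSubconformal (n : ℕ) (h : ℝ) (ν : Measure ℝ) : Prop where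
  exponent_pos : 0 < h
  exponent_le_one : h ≤ 1
  isProbabilityMeasure : IsProbabilityMeasure ν
  measure_singleton : ∀ x, ν {x} = 0
  measureReal_limitSet : ν.real (limitSet S.g n) = 1
  measureReal_image_le : ∀ w, IsWord n w → ∀ A ⊆ limitSet S.g n, ∀ C : ℝ≥0,
    LipschitzOnWith C (wordComp S.g w) A → ν.real (wordComp S.g w '' A) ≤ C ^ h * ν.real A

/-- The Hausdorff measure `μH[h]` restricted to `J` and normalized to total mass `1`; only
meaningful when `μH[h] J` is neither `0` nor `⊤`. -/
def normalizedHausdorff (h : ℝ) (J : Set ℝ) : Measure ℝ := (μH[h] J)⁻¹ • μH[h].restrict J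

theorem normalizedHausdorff_apply {h : ℝ} {J : Set ℝ} (hJ : MeasurableSet J) (A : Set ℝ) :
    normalizedHausdorff h J A = μH[h] (A ∩ J) / μH[h] J := by
  rw [normalizedHausdorff, Measure.smul_apply, Measure.restrict_apply' hJ, smul_eq_mul,
    ENNReal.div_eq_inv_mul]

theorem normalizedHausdorff_self {h : ℝ} {J : Set ℝ} (hJ : MeasurableSet J)
    (hzero : μH[h] J ≠ 0) (htop : μH[h] J ≠ ⊤) : normalizedHausdorff h J J = 1 := by
  rw [normalizedHausdorff_apply hJ, inter_self, ENNReal.div_self hzero htop]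

theorem measurableSet_limitSet : MeasurableSet (limitSet S.g n) :=
  (isCompact_limitSet S.mapsTo_g S.continuousOn_g).measurableSet

theorem normalizedHausdorff_image_le {h : ℝ} (hpos : 0 < h) (hw : IsWord n w) {A : Set ℝ}
    (hA : A ⊆ limitSet S.g n) {C : ℝ≥0} (hC : LipschitzOnWith C (wordComp S.g w) A) :
    normalizedHausdorff h (limitSet S.g n) (wordComp S.g w '' A) ≤
      C ^ h * normalizedHausdorff h (limitSet S.g n) A := by
  have himage : wordComp S.g w '' A ⊆ limitSet S.g n :=
    ((S.mapsTo_wordComp_limitSet hw).mono_left hA).image_subset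
  rw [normalizedHausdorff_apply S.measurableSet_limitSet,
    normalizedHausdorff_apply S.measurableSet_limitSet, inter_eq_left.2 hA,
    inter_eq_left.2 himage, ← mul_div_assoc]
  gcongr
  exact hC.hausdorffMeasure_image_le hpos.le

theorem isSubconformal_normalizedHausdorff {h : ℝ} (hpos : 0 < h) (hle : h ≤ 1)
    (hzero : μH[h] (limitSet S.g n) ≠ 0) (htop : μH[h] (limitSet S.g n) ≠ ⊤) :
    S.IsSubconformal n h (normalizedHausdorff h (limitSet S.g n)) := by
  have hself := normalizedHausdorff_self S.measurableSet_limitSet hzero htop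
  have hprob : IsProbabilityMeasure (normalizedHausdorff h (limitSet S.g n)) := by
    constructor
    rw [normalizedHausdorff_apply S.measurableSet_limitSet, univ_inter,
      ENNReal.div_self hzero htop]
  refine ⟨hpos, hle, hprob, fun x => ?_, by rw [measureReal_def, hself, ENNReal.toReal_one],
    fun w hw A hA C hC => ?_⟩
  · have := Measure.nullSingletonClass_hausdorff ℝ hpos
    rw [normalizedHausdorff_apply S.measurableSet_limitSet,
      measure_mono_null inter_subset_left (measure_singleton x), ENNReal.zero_div]
  · have hbound := ENNReal.toReal_mono
      (ENNReal.mul_ne_top (ENNReal.rpow_ne_top_of_nonneg hpos.le ENNReal.coe_ne_top)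
        (measure_ne_top _ _)) (S.normalizedHausdorff_image_le hpos hw hA hC)
    rwa [ENNReal.toReal_mul, ← ENNReal.toReal_rpow, ENNReal.coe_toReal] at hbound

/-- The mass that `ν` gives to the part of the limit set in the cylinder of `w`. -/
def cylinderMass (n : ℕ) (ν : Measure ℝ) (w : List ℕ) : ℝ :=
  ν.real (wordComp S.g w '' limitSet S.g n)

theorem cylinderMass_nonneg (n : ℕ) (ν : Measure ℝ) (w : List ℕ) : 0 ≤ S.cylinderMass n ν w :=
  measureReal_nonneg

theorem image_wordComp_inter_image_wordComp_subset {i j : ℕ} (hw : IsWord n w) (hi : 1 ≤ i)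
    (hij : i < j) : wordComp S.g (w ++ [i]) '' limitSet S.g n ∩
      wordComp S.g (w ++ [j]) '' limitSet S.g n ⊆ {wordComp S.g w (S.b i)} := by
  rintro _ ⟨⟨x, hx, rfl⟩, y, hy, hxy⟩
  have hj : 1 ≤ j := hi.trans hij.le
  have hx := S.limitSet_subset hx
  have hy := S.limitSet_subset hy
  rw [wordComp_append, wordComp_append] at hxy
  have hgeq : S.g j y = S.g i x :=
    S.injOn_wordComp hw (S.mapsTo_g j hj hy) (S.mapsTo_g i hi hx) hxy
  have hle : S.g i x ≤ S.b i := hgeq ▸ (S.mapsTo_g_Icc_b hj hy).2.trans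
    (S.b_strictAnti.antitone (Nat.le_sub_one_of_lt hij))
  rw [mem_singleton_iff, wordComp_append, ← hle.antisymm (S.mapsTo_g_Icc_b hi hx).1]
  rfl

namespace IsSubconformal

variable {S} {h : ℝ} {ν : Measure ℝ}

theorem cylinderMass_nil (hν : S.IsSubconformal n h ν) : S.cylinderMass n ν [] = 1 := by
  rw [cylinderMass, wordComp, image_id, hν.measureReal_limitSet]

theorem aedisjoint_image_wordComp (hν : S.IsSubconformal n h ν) (hw : IsWord n w) :
    (Finset.Icc 1 n : Set ℕ).Pairwise fun i j =>
      AEDisjoint ν (wordComp S.g (w ++ [i]) '' limitSet S.g n)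
        (wordComp S.g (w ++ [j]) '' limitSet S.g n) := by
  intro i hi j hj hij
  wlog hlt : i < j generalizing i j
  · exact (this hj hi hij.symm (hij.lt_or_gt.resolve_left hlt)).symm
  · exact measure_mono_null (S.image_wordComp_inter_image_wordComp_subset hw
      (Finset.mem_Icc.1 hi).1 hlt) (hν.measure_singleton _)

theorem sum_cylinderMass_children (hν : S.IsSubconformal n h ν) (hw : IsWord n w) :
    ∑ k ∈ Finset.Icc 1 n, S.cylinderMass n ν (w ++ [k]) = S.cylinderMass n ν w := by
  have := hν.isProbabilityMeasure
  have hchildren : wordComp S.g w '' limitSet S.g n =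
      ⋃ k ∈ Finset.Icc 1 n, wordComp S.g (w ++ [k]) '' limitSet S.g n := by
    conv_lhs => rw [limitSet_eq_biUnion_image S.mapsTo_g S.injOn_g, image_iUnion₂]
    simp only [image_wordComp_append]
    rfl
  rw [cylinderMass, hchildren, measureReal_biUnion_finset₀ (hν.aedisjoint_image_wordComp hw)]
  · rfl
  · intro k hk
    exact ((isCompact_limitSet S.mapsTo_g S.continuousOn_g).image_of_continuousOn
      ((S.continuousOn_wordComp (hw.append (isWord_singleton hk))).mono
        S.limitSet_subset)).measurableSet.nullMeasurableSet

theorem sum_cylinderMass_append (hν : S.IsSubconformal n h ν) (hw : IsWord n w) (l : ℕ) :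
    ∑ u ∈ wordsOfLength n l, S.cylinderMass n ν (w ++ u) = S.cylinderMass n ν w := by
  induction l generalizing w with
  | zero => simp [wordsOfLength]
  | succ l ih =>
    rw [sum_wordsOfLength_succ, ← hν.sum_cylinderMass_children hw]
    refine Finset.sum_congr rfl fun k hk => ?_
    simpa only [List.append_assoc, List.singleton_append] using ih (hw.append (isWord_singleton hk))

end IsSubconformal

theorem wordComp_mem_uIcc (hv : IsWord n v) {x : ℝ} (hx : x ∈ Icc (0 : ℝ) 1) :
    wordComp S.g v x ∈ uIcc (wordComp S.g v 1) (wordComp S.g v 0) :=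
  (S.monotoneOrAntitoneOn_wordComp hv).apply_mem_uIcc ordConnected_Icc unitInterval.one_mem
    unitInterval.zero_mem (by rwa [uIcc_of_ge zero_le_one])

theorem lipschitzOnWith_wordComp_cylinder (hw : IsWord n w) (hv : IsWord n v) :
    LipschitzOnWith (Real.exp (S.distortionConst * S.α ^ v.length) * S.cylinderLength (w ++ v) /
        S.cylinderLength v).toNNReal (wordComp S.g w) (wordComp S.g v '' Icc 0 1) := by
  have hlen := S.cylinderLength_pos hv
  have hlen' := S.cylinderLength_pos (hw.append hv)
  refine LipschitzOnWith.of_dist_le_mul ?_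
  rintro _ ⟨x, hx, rfl⟩ _ ⟨y, hy, rfl⟩
  have hdist := S.secantDistortionOn_wordComp hw
    (S.mapsTo_wordComp hv unitInterval.one_mem) (S.mapsTo_wordComp hv unitInterval.zero_mem)
    (S.wordComp_mem_uIcc hv hy) (S.wordComp_mem_uIcc hv hx) right_mem_uIcc left_mem_uIcc
  rw [Real.coe_toNNReal _ (by positivity), Real.dist_eq, Real.dist_eq, div_mul_eq_mul_div,
    le_div_iff₀ hlen, mul_assoc]
  refine hdist.trans ?_
  rw [← wordComp_append, ← wordComp_append, ← cylinderLength, ← cylinderLength]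
  gcongr
  exact S.cylinderLength_le_pow hv

/-! ### Densities of cylinders -/

/-- The supremum over all words `w` of the density of the cylinder of `w`. -/
def maxCylinderDensity (n : ℕ) (h : ℝ) (ν : Measure ℝ) : ℝ :=
  ⨆ w : {w // IsWord n w}, S.cylinderMass n ν w / S.cylinderLength w ^ h

theorem cylinderLength_rpow_mul_rpow_le {h : ℝ} (hpos : 0 < h) (hle : h ≤ 1) (hw : IsWord n w)
    (hv : IsWord n v) : S.cylinderLength w ^ h * S.cylinderLength v ^ h ≤
      Real.exp S.distortionConst * S.cylinderLength (w ++ v) ^ h := by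
  have hlen := S.cylinderLength_nonneg
  rw [← Real.mul_rpow (hlen w) (hlen v)]
  refine (Real.rpow_le_rpow (mul_nonneg (hlen w) (hlen v)) (S.cylinderLength_mul_le hw hv)
    hpos.le).trans ?_
  rw [Real.mul_rpow (Real.exp_pos _).le (hlen _)]
  have := Real.rpow_nonneg (hlen (w ++ v)) h
  gcongr
  exact Real.rpow_le_self_of_one_le (Real.one_le_exp NNReal.zero_le_coe) hle

namespace IsSubconformal

variable {S} {h : ℝ} {ν : Measure ℝ}

-- Bounded distortion on the short interval of `v` makes the density of `w ++ v` at most that of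
-- `v`, up to a factor tending to `1` with the length of `v`.
theorem cylinderMass_append_mul_le (hν : S.IsSubconformal n h ν) (hw : IsWord n w)
    (hv : IsWord n v) : S.cylinderMass n ν (w ++ v) * S.cylinderLength v ^ h ≤
      Real.exp (S.distortionConst * S.α ^ v.length) *
        (S.cylinderLength (w ++ v) ^ h * S.cylinderMass n ν v) := by
  have hlen := S.cylinderLength_pos hv
  have hlen' := S.cylinderLength_pos (hw.append hv)
  have hmass := hν.measureReal_image_le w hw _ (S.mapsTo_wordComp_limitSet hv).image_subset _
    ((S.lipschitzOnWith_wordComp_cylinder hw hv).mono (image_mono S.limitSet_subset))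
  have hexp : Real.exp (S.distortionConst * S.α ^ v.length) ^ h ≤
      Real.exp (S.distortionConst * S.α ^ v.length) :=
    Real.rpow_le_self_of_one_le (Real.one_le_exp (by positivity)) hν.exponent_le_one
  rw [← image_wordComp_append, ← cylinderMass, ← cylinderMass,
    Real.coe_toNNReal _ (by positivity), Real.div_rpow (by positivity) hlen.le,
    Real.mul_rpow (by positivity) hlen'.le, div_mul_eq_mul_div,
    le_div_iff₀ (by positivity), mul_assoc] at hmass
  have := S.cylinderMass_nonneg n ν v
  exact hmass.trans (by gcongr)

theorem cylinderMass_le_exp_mul (hν : S.IsSubconformal n h ν) (hw : IsWord n w) :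
    S.cylinderMass n ν w ≤ Real.exp S.distortionConst * S.cylinderLength w ^ h := by
  simpa [cylinderLength_nil, hν.cylinderMass_nil] using
    hν.cylinderMass_append_mul_le hw isWord_nil

theorem bddAbove_cylinderDensity (hν : S.IsSubconformal n h ν) :
    BddAbove (range fun w : {w // IsWord n w} =>
      S.cylinderMass n ν w / S.cylinderLength w ^ h) := by
  refine ⟨Real.exp S.distortionConst, forall_mem_range.2 fun w => ?_⟩
  rw [div_le_iff₀ (Real.rpow_pos_of_pos (S.cylinderLength_pos w.2) h)]
  exact hν.cylinderMass_le_exp_mul w.2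

theorem cylinderDensity_le_maxCylinderDensity (hν : S.IsSubconformal n h ν) (hw : IsWord n w) :
    S.cylinderMass n ν w / S.cylinderLength w ^ h ≤ S.maxCylinderDensity n h ν :=
  le_ciSup hν.bddAbove_cylinderDensity ⟨w, hw⟩

theorem cylinderMass_le_maxCylinderDensity_mul (hν : S.IsSubconformal n h ν) (hw : IsWord n w) :
    S.cylinderMass n ν w ≤ S.maxCylinderDensity n h ν * S.cylinderLength w ^ h :=
  (div_le_iff₀ (Real.rpow_pos_of_pos (S.cylinderLength_pos hw) h)).1
    (hν.cylinderDensity_le_maxCylinderDensity hw)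

theorem one_le_maxCylinderDensity (hν : S.IsSubconformal n h ν) :
    1 ≤ S.maxCylinderDensity n h ν := by
  simpa [cylinderLength_nil, hν.cylinderMass_nil] using
    hν.cylinderDensity_le_maxCylinderDensity isWord_nil

theorem sum_maxCylinderDensity_mul_le (hν : S.IsSubconformal n h ν) (hw : IsWord n w) (l : ℕ) :
    ∑ u ∈ wordsOfLength n l, S.maxCylinderDensity n h ν * S.cylinderLength (w ++ u) ^ h ≤
      S.maxCylinderDensity n h ν * ((n : ℝ) ^ l) ^ (1 - h) * S.cylinderLength w ^ h := by
  have := zero_le_one.trans hν.one_le_maxCylinderDensity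
  rw [← Finset.mul_sum, mul_assoc]
  gcongr
  exact S.sum_cylinderLength_append_rpow_le hν.exponent_pos hν.exponent_le_one hw l

theorem cylinderDensity_le_maxCylinderDensity_mul (hν : S.IsSubconformal n h ν)
    (hw : IsWord n w) (l : ℕ) : S.cylinderMass n ν w / S.cylinderLength w ^ h ≤
      S.maxCylinderDensity n h ν * ((n : ℝ) ^ l) ^ (1 - h) := by
  rw [div_le_iff₀ (Real.rpow_pos_of_pos (S.cylinderLength_pos hw) h),
    ← hν.sum_cylinderMass_append hw l]
  refine (Finset.sum_le_sum fun u hu => ?_).trans (hν.sum_maxCylinderDensity_mul_le hw l)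
  exact hν.cylinderMass_le_maxCylinderDensity_mul (hw.append (mem_wordsOfLength.1 hu).2)

-- The descendants of `w` have total mass at least that of `w` and each has density at most the
-- maximal one, so a nearly maximal density of `w` leaves no room for a small density of `w ++ v`.
theorem maxCylinderDensity_mul_add_cylinderMass_le (hν : S.IsSubconformal n h ν)
    (hw : IsWord n w) (hv : v ∈ wordsOfLength n l) :
    S.maxCylinderDensity n h ν * S.cylinderLength (w ++ v) ^ h + S.cylinderMass n ν w ≤
      S.cylinderMass n ν (w ++ v) +
        S.maxCylinderDensity n h ν * ((n : ℝ) ^ l) ^ (1 - h) * S.cylinderLength w ^ h := by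
  have hmass := hν.sum_cylinderMass_append hw l
  have hlength := hν.sum_maxCylinderDensity_mul_le hw l
  rw [← Finset.add_sum_erase _ _ hv] at hmass hlength
  have hother : ∑ u ∈ (wordsOfLength n l).erase v, S.cylinderMass n ν (w ++ u) ≤
      ∑ u ∈ (wordsOfLength n l).erase v,
        S.maxCylinderDensity n h ν * S.cylinderLength (w ++ u) ^ h :=
    Finset.sum_le_sum fun u hu => hν.cylinderMass_le_maxCylinderDensity_mul
      (hw.append (mem_wordsOfLength.1 (Finset.mem_of_mem_erase hu)).2)
  linarith

theorem maxCylinderDensity_mul_cylinderLength_le (hν : S.IsSubconformal n h ν)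
    (hw : IsWord n w) (hv : v ∈ wordsOfLength n l) :
    S.maxCylinderDensity n h ν * S.cylinderLength v -
        (S.maxCylinderDensity n h ν * ((n : ℝ) ^ l) ^ (1 - h) -
          S.cylinderMass n ν w / S.cylinderLength w ^ h) * Real.exp S.distortionConst ≤
      Real.exp (S.distortionConst * S.α ^ l) * S.cylinderMass n ν v := by
  obtain ⟨hlength, hv'⟩ := mem_wordsOfLength.1 hv
  set M := S.maxCylinderDensity n h ν
  set T := ((n : ℝ) ^ l) ^ (1 - h)
  set r := S.cylinderMass n ν w / S.cylinderLength w ^ h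
  have hM : 0 ≤ M := zero_le_one.trans hν.one_le_maxCylinderDensity
  have hMTr : 0 ≤ M * T - r := sub_nonneg.2 (hν.cylinderDensity_le_maxCylinderDensity_mul hw l)
  have hwpos := Real.rpow_pos_of_pos (S.cylinderLength_pos hw) h
  have hvpos := Real.rpow_pos_of_pos (S.cylinderLength_pos hv') h
  have hwvpos := Real.rpow_pos_of_pos (S.cylinderLength_pos (hw.append hv')) h
  have hv_le : S.cylinderLength v ≤ S.cylinderLength v ^ h :=
    Real.self_le_rpow_of_le_one (S.cylinderLength_nonneg v) (S.cylinderLength_le_one hv')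
      hν.exponent_le_one
  have hprod := S.cylinderLength_rpow_mul_rpow_le hν.exponent_pos hν.exponent_le_one hw hv'
  have hchild := hν.maxCylinderDensity_mul_add_cylinderMass_le hw hv
  have hmass : S.cylinderMass n ν w = r * S.cylinderLength w ^ h :=
    (div_mul_cancel₀ _ hwpos.ne').symm
  refine le_of_mul_le_mul_right ?_ hwvpos
  calc (M * S.cylinderLength v - (M * T - r) * Real.exp S.distortionConst) *
        S.cylinderLength (w ++ v) ^ h
      = M * S.cylinderLength v * S.cylinderLength (w ++ v) ^ h -
        (M * T - r) * (Real.exp S.distortionConst * S.cylinderLength (w ++ v) ^ h) := by ring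
    _ ≤ M * S.cylinderLength v ^ h * S.cylinderLength (w ++ v) ^ h -
        (M * T - r) * (S.cylinderLength w ^ h * S.cylinderLength v ^ h) := by gcongr
    _ = (M * S.cylinderLength (w ++ v) ^ h - (M * T - r) * S.cylinderLength w ^ h) *
        S.cylinderLength v ^ h := by ring
    _ ≤ S.cylinderMass n ν (w ++ v) * S.cylinderLength v ^ h := by
        gcongr
        linarith
    _ ≤ _ := hν.cylinderMass_append_mul_le hw hv'
    _ = _ := by rw [hlength]; ring

theorem maxCylinderDensity_mul_sum_le (hν : S.IsSubconformal n h ν) (hw : IsWord n w) {N : ℕ}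
    (hN : N ≤ n) (l : ℕ) :
    S.maxCylinderDensity n h ν * ∑ v ∈ wordsOfLength N l, S.cylinderLength v -
        N ^ l * ((S.maxCylinderDensity n h ν * ((n : ℝ) ^ l) ^ (1 - h) -
          S.cylinderMass n ν w / S.cylinderLength w ^ h) * Real.exp S.distortionConst) ≤
      Real.exp (S.distortionConst * S.α ^ l) := by
  have hsub := wordsOfLength_mono (l := l) hN
  have hsum := Finset.sum_le_sum fun v hv =>
    hν.maxCylinderDensity_mul_cylinderLength_le hw (hsub hv)
  rw [Finset.sum_sub_distrib, ← Finset.mul_sum, Finset.sum_const, ← Finset.mul_sum,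
    card_wordsOfLength, nsmul_eq_mul, Nat.cast_pow] at hsum
  refine hsum.trans (mul_le_of_le_one_right (Real.exp_pos _).le ?_)
  calc ∑ v ∈ wordsOfLength N l, S.cylinderMass n ν v
      ≤ ∑ v ∈ wordsOfLength n l, S.cylinderMass n ν v :=
        Finset.sum_le_sum_of_subset_of_nonneg hsub fun v _ _ => S.cylinderMass_nonneg n ν v
    _ = 1 := by rw [← hν.cylinderMass_nil, ← hν.sum_cylinderMass_append isWord_nil l]; rfl

-- Letting the density of `w` approach its supremum.
theorem maxCylinderDensity_mul_le (hν : S.IsSubconformal n h ν) {N : ℕ} (hN : 1 ≤ N)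
    (hNn : N ≤ n) (l : ℕ) :
    S.maxCylinderDensity n h ν * (∑ v ∈ wordsOfLength N l, S.cylinderLength v -
        N ^ l * (((n : ℝ) ^ l) ^ (1 - h) - 1) * Real.exp S.distortionConst) ≤
      Real.exp (S.distortionConst * S.α ^ l) := by
  have : Nonempty {w // IsWord n w} := ⟨⟨[], isWord_nil⟩⟩
  have hfactor : (0 : ℝ) < N ^ l * Real.exp S.distortionConst := by positivity
  set M := S.maxCylinderDensity n h ν
  suffices hsup : M ≤ (Real.exp (S.distortionConst * S.α ^ l) -
      M * ∑ v ∈ wordsOfLength N l, S.cylinderLength v +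
      N ^ l * Real.exp S.distortionConst * (M * ((n : ℝ) ^ l) ^ (1 - h))) /
      (N ^ l * Real.exp S.distortionConst) by
    rw [le_div_iff₀ hfactor] at hsup
    linarith
  refine ciSup_le fun w => ?_
  rw [le_div_iff₀ hfactor]
  linarith [hν.maxCylinderDensity_mul_sum_le w.2 hNn l]

end IsSubconformal

/-- Exponents `h n ≤ 1` that approach `1` faster than `1 / log n`. -/
structure IsNearOneExponent (h : ℕ → ℝ) : Prop where
  eventually_le_one : ∀ᶠ n in atTop, h n ≤ 1
  tendsto_one_sub_mul_log : Tendsto (fun n : ℕ => (1 - h n) * Real.log n) atTop (𝓝 0)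

namespace IsNearOneExponent

variable {h : ℕ → ℝ}

theorem eventually_pos (hh : IsNearOneExponent h) : ∀ᶠ n in atTop, 0 < h n := by
  have hlog : ∀ᶠ n : ℕ in atTop, 1 ≤ Real.log n :=
    (Real.tendsto_log_atTop.comp tendsto_natCast_atTop_atTop).eventually_ge_atTop 1
  filter_upwards [hlog, hh.tendsto_one_sub_mul_log.eventually_lt_const zero_lt_one]
    with n hlog hlt
  by_contra hneg
  nlinarith

theorem tendsto_rpow_one_sub (hh : IsNearOneExponent h) (l : ℕ) :
    Tendsto (fun n : ℕ => ((n : ℝ) ^ l) ^ (1 - h n)) atTop (𝓝 1) := by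
  have hexp : Tendsto (fun n : ℕ => Real.exp (l * ((1 - h n) * Real.log n))) atTop (𝓝 1) := by
    simpa using (hh.tendsto_one_sub_mul_log.const_mul (l : ℝ)).rexp
  refine hexp.congr' ?_
  filter_upwards [eventually_ge_atTop 1] with n hn
  rw [Real.rpow_def_of_pos (by positivity), Real.log_pow]
  ring_nf

end IsNearOneExponent

theorem tendsto_exp_distortionConst_mul_pow :
    Tendsto (fun l : ℕ => Real.exp (S.distortionConst * S.α ^ l)) atTop (𝓝 1) := by
  simpa using ((tendsto_pow_atTop_nhds_zero_of_lt_one S.α.2 S.α_lt_one).const_mul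
    (S.distortionConst : ℝ)).rexp

theorem eventually_maxCylinderDensity_le {h : ℕ → ℝ} (hh : IsNearOneExponent h) {ε : ℝ}
    (hε : 0 < ε) :
    ∀ᶠ n in atTop, ∀ ν, S.IsSubconformal n (h n) ν → S.maxCylinderDensity n (h n) ν ≤ 1 + ε := by
  obtain ⟨l, hl⟩ := (S.tendsto_exp_distortionConst_mul_pow.eventually_lt_const
    (lt_add_of_pos_right 1 hε)).exists
  have hquot : Real.exp (S.distortionConst * S.α ^ l) / (1 + ε) < 1 := by
    rwa [div_lt_one (by positivity)]
  obtain ⟨N, hsum, hN⟩ := (((S.tendsto_sum_cylinderLength l).eventually_const_lt hquot).and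
    (eventually_ge_atTop 1)).exists
  have hlim : Tendsto (fun n : ℕ => ∑ v ∈ wordsOfLength N l, S.cylinderLength v -
      N ^ l * (((n : ℝ) ^ l) ^ (1 - h n) - 1) * Real.exp S.distortionConst) atTop
      (𝓝 (∑ v ∈ wordsOfLength N l, S.cylinderLength v)) := by
    simpa using ((((hh.tendsto_rpow_one_sub l).sub_const 1).const_mul ((N : ℝ) ^ l)).mul_const
      (Real.exp S.distortionConst)).const_sub (∑ v ∈ wordsOfLength N l, S.cylinderLength v)
  filter_upwards [hlim.eventually_const_lt hsum, eventually_ge_atTop N] with n hlt hNn ν hν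
  have hbound := hν.maxCylinderDensity_mul_le hN hNn l
  have hexp := Real.exp_pos (S.distortionConst * S.α ^ l)
  refine le_of_mul_le_mul_right (hbound.trans ?_) ((div_pos hexp (by positivity)).trans hlt)
  rw [div_lt_iff₀' (by positivity)] at hlt
  exact hlt.le

theorem eventually_cylinderMass_le {h : ℕ → ℝ} (hh : IsNearOneExponent h) {ε : ℝ} (hε : 0 < ε) :
    ∀ᶠ n in atTop, ∀ ν, S.IsSubconformal n (h n) ν → ∀ w, IsWord n w →
      S.cylinderMass n ν w ≤ (1 + ε) * S.cylinderLength w ^ h n := by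
  filter_upwards [S.eventually_maxCylinderDensity_le hh hε] with n hmax ν hν w hw
  refine (hν.cylinderMass_le_maxCylinderDensity_mul hw).trans ?_
  have := Real.rpow_nonneg (S.cylinderLength_nonneg w) (h n)
  gcongr
  exact hmax ν hν

/-! ### Intervals inside cylinders -/

theorem sum_rpow_abs_sub_projIcc_le {F : ℝ → ℝ} (hF : MonotoneOrAntitoneOn F (Icc 0 1)) {h a b : ℝ}
    (hpos : 0 < h) (hle : h ≤ 1) (ha : 0 ≤ a) (hab : a ≤ b) (hb : b ≤ 1) (n l : ℕ) :
    ∑ u ∈ wordsOfLength n l, |F (projIcc a b hab (wordComp S.g u 1)) -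
        F (projIcc a b hab (wordComp S.g u 0))| ^ h ≤
      ((n : ℝ) ^ l) ^ (1 - h) * |F b - F a| ^ h := by
  have hproj : MonotoneOrAntitoneOn (fun x => F (projIcc a b hab x)) (Icc 0 1) :=
    hF.comp (.inl ((Subtype.mono_coe _).comp (monotone_projIcc hab) |>.monotoneOn _))
      fun x _ => Icc_subset_Icc ha hb (projIcc a b hab x).2
  simpa only [projIcc_of_right_le hab hb, projIcc_of_le_left hab ha] using
    S.sum_rpow_abs_sub_wordComp_le hproj hpos hle n l

theorem IsSubconformal.measureReal_image_le_of_forall_wordsOfLength {S : DecreasingIFS}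
    {h a b L : ℝ} {ν : Measure ℝ} {A : Set ℝ} (hν : S.IsSubconformal n h ν) (hw : IsWord n w)
    (hL : 0 ≤ L) (ha : 0 ≤ a) (hab : a ≤ b) (hb : b ≤ 1) (hA : A ⊆ limitSet S.g n)
    (hpiece : ∀ u ∈ wordsOfLength n l,
      ν.real (wordComp S.g w '' (wordComp S.g u '' limitSet S.g n ∩ A)) ≤
        L * |wordComp S.g w (projIcc a b hab (wordComp S.g u 1)) -
          wordComp S.g w (projIcc a b hab (wordComp S.g u 0))| ^ h) :
    ν.real (wordComp S.g w '' A) ≤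
      L * (((n : ℝ) ^ l) ^ (1 - h) * |wordComp S.g w b - wordComp S.g w a| ^ h) := by
  have hcover : wordComp S.g w '' A = ⋃ u ∈ wordsOfLength n l,
      wordComp S.g w '' (wordComp S.g u '' limitSet S.g n ∩ A) := by
    rw [← image_iUnion₂, ← iUnion₂_inter,
      ← limitSet_eq_biUnion_image_wordComp S.mapsTo_g S.injOn_g l, inter_eq_right.2 hA]
  rw [hcover]
  refine (measureReal_biUnion_finset_le _ _).trans <| (Finset.sum_le_sum hpiece).trans ?_
  rw [← Finset.mul_sum]
  gcongr
  exact S.sum_rpow_abs_sub_projIcc_le (S.monotoneOrAntitoneOn_wordComp hw) hν.exponent_pos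
    hν.exponent_le_one ha hab hb n l

/-- All copies of `[a, b]` under compositions of the maps have `ν`-mass at most `L` times the
`h`-th power of their length. -/
def IntervalDensityLE (n : ℕ) (h : ℝ) (ν : Measure ℝ) (L a b : ℝ) : Prop :=
  ∀ w, IsWord n w → ν.real (wordComp S.g w '' (limitSet S.g n ∩ Icc a b)) ≤
    L * |wordComp S.g w b - wordComp S.g w a| ^ h

theorem abs_wordComp_sub_le_one_add_mul (hw : IsWord n w) {a b a' b' η : ℝ} (ha' : 0 ≤ a')
    (haa' : a' ≤ a) (hab : a < b) (hbb' : b ≤ b') (hb' : b' ≤ 1)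
    (hη : Real.exp S.distortionConst * ((a - a') + (b' - b)) ≤ η * (b - a)) :
    |wordComp S.g w b' - wordComp S.g w a'| ≤
      (1 + η) * |wordComp S.g w b - wordComp S.g w a| := by
  have ha : a ∈ Icc (0 : ℝ) 1 := ⟨by linarith, by linarith⟩
  have hb : b ∈ Icc (0 : ℝ) 1 := ⟨by linarith, by linarith⟩
  have hdist := S.secantDistortionOn_wordComp hw
  have hleft := hdist.of_Icc (x := a') ⟨ha', by linarith⟩ ha ha hb
  have hright := hdist.of_Icc (y := b') hb ⟨by linarith, hb'⟩ ha hb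
  rw [abs_of_pos (sub_pos.2 hab), abs_of_nonneg (sub_nonneg.2 haa')] at hleft
  rw [abs_of_pos (sub_pos.2 hab), abs_of_nonneg (sub_nonneg.2 hbb')] at hright
  have htriangle : |wordComp S.g w b' - wordComp S.g w a'| ≤
      |wordComp S.g w b' - wordComp S.g w b| + (|wordComp S.g w b - wordComp S.g w a| +
        |wordComp S.g w a - wordComp S.g w a'|) :=
    (abs_sub_le _ _ _).trans (add_le_add_right (abs_sub_le _ _ _) _)
  have hscaled := mul_le_mul_of_nonneg_right hη (abs_nonneg (wordComp S.g w b - wordComp S.g w a))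
  refine htriangle.trans (le_of_mul_le_mul_right ?_ (sub_pos.2 hab))
  linarith

theorem IsSubconformal.measureReal_image_le_of_cylinder_subset {S : DecreasingIFS}
    {h a b a' b' L : ℝ} {ν : Measure ℝ} (hν : S.IsSubconformal n h ν) (hw : IsWord n w)
    (hL : 0 ≤ L) (hmass : ∀ v, IsWord n v → S.cylinderMass n ν v ≤ L * S.cylinderLength v ^ h)
    (ha' : 0 ≤ a') (hab' : a' ≤ b') (hb' : b' ≤ 1)
    (hsub : ∀ u ∈ wordsOfLength n l, ∀ y ∈ Icc (0 : ℝ) 1, wordComp S.g u y ∈ Icc a b →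
      MapsTo (wordComp S.g u) (Icc 0 1) (Icc a' b')) :
    ν.real (wordComp S.g w '' (limitSet S.g n ∩ Icc a b)) ≤
      L * (((n : ℝ) ^ l) ^ (1 - h) * |wordComp S.g w b' - wordComp S.g w a'| ^ h) := by
  have := hν.isProbabilityMeasure
  refine hν.measureReal_image_le_of_forall_wordsOfLength hw hL ha' hab' hb' inter_subset_left
    fun u hu => ?_
  rcases (wordComp S.g u '' limitSet S.g n ∩ (limitSet S.g n ∩ Icc a b)).eq_empty_or_nonempty
    with hempty | ⟨_, ⟨y, hy, rfl⟩, -, hyab⟩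
  · rw [hempty, image_empty, measureReal_empty]
    positivity
  · have hmaps := hsub u hu y (S.limitSet_subset hy) hyab
    rw [projIcc_of_mem hab' (hmaps unitInterval.one_mem),
      projIcc_of_mem hab' (hmaps unitInterval.zero_mem)]
    have hmass := hmass (w ++ u) (hw.append (mem_wordsOfLength.1 hu).2)
    rw [cylinderMass, cylinderLength, image_wordComp_append, wordComp_append, wordComp_append]
      at hmass
    exact (measureReal_mono (image_mono inter_subset_left)).trans hmass

-- The threshold `δ` must not depend on `l`: long words are needed to reach it.
theorem exists_eventually_intervalDensityLE {h : ℕ → ℝ} (hh : IsNearOneExponent h) {ε : ℝ}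
    (hε : 0 < ε) : ∃ δ > 0, ∀ l, ∀ᶠ n in atTop, ∀ ν, S.IsSubconformal n (h n) ν →
      ∀ a' a b b', 0 ≤ a' → a' ≤ a → a < b → b ≤ b' → b' ≤ 1 →
        (a - a') + (b' - b) ≤ δ * (b - a) →
        (∀ u ∈ wordsOfLength n l, ∀ y ∈ Icc (0 : ℝ) 1, wordComp S.g u y ∈ Icc a b →
          MapsTo (wordComp S.g u) (Icc 0 1) (Icc a' b')) →
        S.IntervalDensityLE n (h n) ν (1 + ε) a b := by
  obtain ⟨η, hη, hηε⟩ := exists_pos_one_add_pow_le 3 hε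
  have hexp := Real.exp_pos S.distortionConst
  refine ⟨η / Real.exp S.distortionConst, by positivity, fun l => ?_⟩
  filter_upwards [S.eventually_cylinderMass_le hh hη,
    (hh.tendsto_rpow_one_sub l).eventually_le_const (lt_add_of_pos_right 1 hη)]
    with n hmass hcard ν hν a' a b b' ha' haa' hab hbb' hb' hδ hsub w hw
  refine (hν.measureReal_image_le_of_cylinder_subset hw (by positivity) (hmass ν hν) ha'
    (by linarith) hb' hsub).trans ?_
  refine one_add_mul_mul_rpow_le hη.le hηε hcard hν.exponent_pos hν.exponent_le_one
    (abs_nonneg _) (abs_nonneg _) ?_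
  refine S.abs_wordComp_sub_le_one_add_mul hw ha' haa' hab hbb' hb' ?_
  rwa [div_mul_eq_mul_div, le_div_iff₀' hexp] at hδ

theorem eventually_intervalDensityLE_of_le_length {h : ℕ → ℝ} (hh : IsNearOneExponent h) {ε r : ℝ}
    (hε : 0 < ε) (hr : 0 < r) : ∀ᶠ n in atTop, ∀ ν, S.IsSubconformal n (h n) ν →
      ∀ a b, 0 ≤ a → b ≤ 1 → r ≤ b - a → S.IntervalDensityLE n (h n) ν (1 + ε) a b := by
  obtain ⟨δ, hδ, henlarge⟩ := S.exists_eventually_intervalDensityLE hh hε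
  have hlim : Tendsto (fun l : ℕ => 2 * (S.α : ℝ) ^ l) atTop (𝓝 0) := by
    simpa using (tendsto_pow_atTop_nhds_zero_of_lt_one S.α.2 S.α_lt_one).const_mul 2
  obtain ⟨l, hl⟩ := (hlim.eventually_le_const (mul_pos hδ hr)).exists
  filter_upwards [henlarge l] with n hn ν hν a b ha hb hab
  have hpow : 0 ≤ (S.α : ℝ) ^ l := by positivity
  refine hn ν hν (max 0 (a - S.α ^ l)) a b (min 1 (b + S.α ^ l)) (le_max_left _ _)
    (max_le ha (by linarith)) (by linarith) (le_min hb (by linarith)) (min_le_left _ _) ?_ ?_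
  · have hleft := le_max_right 0 (a - S.α ^ l)
    have hright := min_le_right 1 (b + S.α ^ l)
    have hlen := mul_le_mul_of_nonneg_left hab hδ.le
    linarith
  · intro u hu y hy hyab z hz
    obtain ⟨hlength, hu⟩ := mem_wordsOfLength.1 hu
    have hdiam := S.abs_wordComp_sub_le hu hz hy
    rw [hlength, abs_le] at hdiam
    obtain ⟨hz0, hz1⟩ := S.mapsTo_wordComp hu hz
    exact ⟨max_le hz0 (by linarith [hyab.1]), le_min hz1 (by linarith [hyab.2])⟩

theorem IsSubconformal.intervalDensityLE_self {S : DecreasingIFS} {h L : ℝ} {ν : Measure ℝ}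
    (hν : S.IsSubconformal n h ν) (hL : 0 ≤ L) (a : ℝ) : S.IntervalDensityLE n h ν L a a := by
  intro w _
  have hsub : wordComp S.g w '' (limitSet S.g n ∩ Icc a a) ⊆ {wordComp S.g w a} := by
    rw [Icc_self, ← image_singleton]
    exact image_mono inter_subset_right
  rw [measureReal_def, measure_mono_null hsub (hν.measure_singleton _), ENNReal.toReal_zero]
  positivity

theorem exists_b_succ_le_lt {x : ℝ} (hx : 0 < x) (hx1 : x < 1) :
    ∃ i, S.b (i + 1) ≤ x ∧ x < S.b i := by
  classical
  have hex : ∃ i, S.b i ≤ x := (S.b_lim.eventually_le_const hx).exists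
  have hne : Nat.find hex ≠ 0 := by
    intro hzero
    have hle := Nat.find_spec hex
    rw [hzero, S.b_zero] at hle
    linarith
  refine ⟨Nat.find hex - 1, ?_, not_le.1 (Nat.find_min hex (by lia))⟩
  rw [Nat.sub_one_add_one hne]
  exact Nat.find_spec hex

theorem mapsTo_wordComp_Icc_zero_b {i : ℕ} (hu : u ∈ wordsOfLength n 1) {y : ℝ}
    (hy : y ∈ Icc (0 : ℝ) 1) (hlt : wordComp S.g u y < S.b i) :
    MapsTo (wordComp S.g u) (Icc 0 1) (Icc 0 (S.b i)) := by
  obtain ⟨hlength, hu⟩ := mem_wordsOfLength.1 hu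
  obtain ⟨k, rfl⟩ := List.length_eq_one_iff.1 hlength
  have hk := (isWord_cons.1 hu).1.1
  have hik : i < k := S.b_strictAnti.lt_iff_gt.1 ((S.mapsTo_g_Icc_b hk hy).1.trans_lt hlt)
  exact (S.mapsTo_g_Icc_b hk).mono_right (Icc_subset_Icc (S.b_pos k).le
    (S.b_strictAnti.antitone (Nat.le_sub_one_of_lt hik)))

theorem eventually_intervalDensityLE_zero {h : ℕ → ℝ} (hh : IsNearOneExponent h) {ε : ℝ}
    (hε : 0 < ε) : ∀ᶠ n in atTop, ∀ ν, S.IsSubconformal n (h n) ν →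
      ∀ x ∈ Icc (0 : ℝ) 1, S.IntervalDensityLE n (h n) ν (1 + ε) 0 x := by
  obtain ⟨δ, hδ, henlarge⟩ := S.exists_eventually_intervalDensityLE hh hε
  obtain ⟨k₀, hratio⟩ := eventually_atTop.1
    (S.b_ratio.eventually_le_const (lt_add_of_pos_right 1 hδ))
  filter_upwards [henlarge 1, S.eventually_intervalDensityLE_of_le_length hh hε (S.b_pos k₀)]
    with n hsmall hlarge ν hν x hx
  rcases le_or_gt (S.b k₀) x with hkx | hkx
  · exact hlarge ν hν 0 x le_rfl hx.2 (by linarith)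
  rcases hx.1.eq_or_lt with rfl | hpos
  · exact hν.intervalDensityLE_self (by positivity) 0
  obtain ⟨i, hix, hxi⟩ := S.exists_b_succ_le_lt hpos (hkx.trans_le (S.b_le_one k₀))
  have hki : k₀ ≤ i := Nat.lt_succ_iff.1 (S.b_strictAnti.lt_iff_gt.1 (hix.trans_lt hkx))
  refine hsmall ν hν 0 0 x (S.b i) le_rfl le_rfl hpos hxi.le (S.b_le_one i) ?_ ?_
  · have hbi := (div_le_iff₀ (S.b_pos (i + 1))).1 (hratio i hki)
    have hscaled := mul_le_mul_of_nonneg_left hix (by positivity : 0 ≤ 1 + δ)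
    linarith
  · exact fun u hu y hy hyx => S.mapsTo_wordComp_Icc_zero_b hu hy (hyx.2.trans_lt hxi)

theorem image_g_inter_Ici (hk : 1 ≤ k) {A : Set ℝ} (hA : A ⊆ Icc 0 1) {x : ℝ}
    (hx : x ∈ Icc (0 : ℝ) 1) : S.g k '' A ∩ Ici (S.g k x) = S.g k '' (A ∩ Icc 0 x) := by
  rw [← image_inter_preimage]
  congr 1
  ext z
  exact and_congr_right fun hz =>
    ((S.g_anti k hk).le_iff_ge hx (hA hz)).trans (and_iff_right (hA hz).1).symm

theorem image_g_inter_Iic (hk : 1 ≤ k) {A : Set ℝ} (hA : A ⊆ Icc 0 1) {x : ℝ}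
    (hx : x ∈ Icc (0 : ℝ) 1) : S.g k '' A ∩ Iic (S.g k x) = S.g k '' (A ∩ Icc x 1) := by
  rw [← image_inter_preimage]
  congr 1
  ext z
  exact and_congr_right fun hz =>
    ((S.g_anti k hk).le_iff_ge (hA hz) hx).trans (and_iff_left (hA hz).2).symm

theorem measureReal_image_g_inter_Ici_le {h L : ℝ} {ν : Measure ℝ}
    (hinit : ∀ x ∈ Icc (0 : ℝ) 1, S.IntervalDensityLE n h ν L 0 x) (hw : IsWord n w)
    (hk : k ∈ Finset.Icc 1 n) {y : ℝ} (hy : y ∈ Icc (S.b k) (S.b (k - 1))) :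
    ν.real (wordComp S.g w '' (S.g k '' limitSet S.g n ∩ Ici y)) ≤
      L * |wordComp S.g w y - wordComp S.g w (S.b (k - 1))| ^ h := by
  have hk1 := (Finset.mem_Icc.1 hk).1
  obtain ⟨x, hx, rfl⟩ := S.exists_g_eq hk1 hy
  have hbound := hinit x hx (w ++ [k]) (hw.append (isWord_singleton hk))
  rw [image_wordComp_append, wordComp_append, wordComp_append] at hbound
  rw [S.image_g_inter_Ici hk1 S.limitSet_subset hx, ← S.g_zero k hk1]
  exact hbound

theorem measureReal_image_g_inter_Iic_le {h L : ℝ} {ν : Measure ℝ}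
    (hfinal : ∀ x ∈ Icc (0 : ℝ) 1, S.IntervalDensityLE n h ν L x 1) (hw : IsWord n w)
    (hk : k ∈ Finset.Icc 1 n) {y : ℝ} (hy : y ∈ Icc (S.b k) (S.b (k - 1))) :
    ν.real (wordComp S.g w '' (S.g k '' limitSet S.g n ∩ Iic y)) ≤
      L * |wordComp S.g w (S.b k) - wordComp S.g w y| ^ h := by
  have hk1 := (Finset.mem_Icc.1 hk).1
  obtain ⟨x, hx, rfl⟩ := S.exists_g_eq hk1 hy
  have hbound := hfinal x hx (w ++ [k]) (hw.append (isWord_singleton hk))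
  rw [image_wordComp_append, wordComp_append, wordComp_append] at hbound
  rw [S.image_g_inter_Iic hk1 S.limitSet_subset hx, ← S.g_one k hk1]
  exact hbound

theorem limitSet_inter_Icc_subset {x : ℝ} (hx : S.b 1 < x) :
    limitSet S.g n ∩ Icc x 1 ⊆ S.g 1 '' limitSet S.g n ∩ Ici x := by
  rintro z ⟨hz, hxz, -⟩
  refine ⟨?_, hxz⟩
  rw [limitSet_eq_biUnion_image S.mapsTo_g S.injOn_g] at hz
  simp only [mem_iUnion, exists_prop] at hz
  obtain ⟨k, hk, y, hy, rfl⟩ := hz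
  have hk := (Finset.mem_Icc.1 hk).1
  have hlt : S.b 1 < S.b (k - 1) :=
    (hx.trans_le hxz).trans_le (S.mapsTo_g_Icc_b hk (S.limitSet_subset hy)).2
  obtain rfl : k = 1 := by
    have := S.b_strictAnti.lt_iff_gt.1 hlt
    lia
  exact mem_image_of_mem _ hy

-- `g 1` is decreasing, so it carries an initial segment of `[0, 1]` to a segment ending at `1`.
theorem eventually_intervalDensityLE_one {h : ℕ → ℝ} (hh : IsNearOneExponent h) {ε : ℝ}
    (hε : 0 < ε) : ∀ᶠ n in atTop, ∀ ν, S.IsSubconformal n (h n) ν →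
      ∀ x ∈ Icc (0 : ℝ) 1, S.IntervalDensityLE n (h n) ν (1 + ε) x 1 := by
  have hgap : 0 < 1 - S.b 1 := by
    rw [← S.b_zero]
    exact sub_pos.2 (S.b_strictAnti zero_lt_one)
  filter_upwards [S.eventually_intervalDensityLE_of_le_length hh hε hgap,
    S.eventually_intervalDensityLE_zero hh hε, eventually_ge_atTop 1]
    with n hlarge hinit hn ν hν x hx w hw
  have := hν.isProbabilityMeasure
  rcases le_or_gt x (S.b 1) with hxb | hxb
  · exact hlarge ν hν x 1 hx.1 le_rfl (by linarith) w hw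
  have hbound := S.measureReal_image_g_inter_Ici_le (hinit ν hν) hw (k := 1)
    (Finset.mem_Icc.2 ⟨le_rfl, hn⟩) (y := x) ⟨hxb.le, hx.2.trans_eq S.b_zero.symm⟩
  rw [abs_sub_comm, Nat.sub_self, S.b_zero] at hbound
  exact (measureReal_mono (image_mono (S.limitSet_inter_Icc_subset hxb))).trans hbound

/-! ### Intervals meeting the partition points -/

theorem measureReal_image_g_inter_Icc_le {h L s t : ℝ} {ν : Measure ℝ} [IsProbabilityMeasure ν]
    (hL : 0 ≤ L) (hinit : ∀ x ∈ Icc (0 : ℝ) 1, S.IntervalDensityLE n h ν L 0 x)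
    (hfinal : ∀ x ∈ Icc (0 : ℝ) 1, S.IntervalDensityLE n h ν L x 1) (hst : s ≤ t) {j : ℕ}
    (hj : S.b j ∈ Icc s t) (hk : k ∈ Finset.Icc 1 n) :
    ν.real (S.g k '' limitSet S.g n ∩ Icc s t) ≤
      L * |(projIcc s t hst (S.b k) : ℝ) - projIcc s t hst (S.b (k - 1))| ^ h := by
  have hk1 := (Finset.mem_Icc.1 hk).1
  have hb : S.b k ≤ S.b (k - 1) := S.b_strictAnti.antitone (k.sub_le 1)
  have hg : S.g k '' limitSet S.g n ⊆ Icc (S.b k) (S.b (k - 1)) :=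
    ((S.mapsTo_g_Icc_b hk1).mono_left S.limitSet_subset).image_subset
  rcases (S.g k '' limitSet S.g n ∩ Icc s t).eq_empty_or_nonempty with hempty | ⟨z, hz, hzst⟩
  · rw [hempty, measureReal_empty]
    positivity
  rcases Nat.lt_or_ge j k with hjk | hkj
  · have hbj : S.b (k - 1) ≤ S.b j := S.b_strictAnti.antitone (Nat.le_sub_one_of_lt hjk)
    have hsb : s ≤ S.b (k - 1) := hzst.1.trans (hg hz).2
    have hbound := S.measureReal_image_g_inter_Ici_le hinit isWord_nil hk (y := max s (S.b k))
      ⟨le_max_right _ _, max_le hsb hb⟩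
    simp only [wordComp, image_id, id_eq] at hbound
    rw [projIcc_of_mem hst ⟨hsb, hbj.trans hj.2⟩, coe_projIcc,
      min_eq_right (hb.trans (hbj.trans hj.2))]
    refine (measureReal_mono ?_).trans hbound
    exact fun y ⟨hy, hyst⟩ => ⟨hy, max_le hyst.1 (hg hy).1⟩
  · have hbj : S.b j ≤ S.b k := S.b_strictAnti.antitone hkj
    have hbt : S.b k ≤ t := (hg hz).1.trans hzst.2
    have hbound := S.measureReal_image_g_inter_Iic_le hfinal isWord_nil hk
      (y := min t (S.b (k - 1))) ⟨le_min hbt hb, min_le_right _ _⟩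
    simp only [wordComp, image_id, id_eq] at hbound
    rw [projIcc_of_mem hst ⟨hj.1.trans hbj, hbt⟩, coe_projIcc,
      max_eq_right (le_min hst (hj.1.trans (hbj.trans hb)))]
    refine (measureReal_mono ?_).trans hbound
    exact fun y ⟨hy, hyst⟩ => ⟨hy, le_min hyst.2 (hg hy).2⟩

theorem eventually_measureReal_Icc_le {h : ℕ → ℝ} (hh : IsNearOneExponent h) {ε : ℝ}
    (hε : 0 < ε) : ∀ᶠ n in atTop, ∀ ν, S.IsSubconformal n (h n) ν →
      ∀ s t, 0 ≤ s → s ≤ t → t ≤ 1 → (∃ j, S.b j ∈ Icc s t) →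
        ν.real (limitSet S.g n ∩ Icc s t) ≤ (1 + ε) * (t - s) ^ h n := by
  obtain ⟨η, hη, hηε⟩ := exists_pos_one_add_pow_le 3 hε
  filter_upwards [S.eventually_intervalDensityLE_zero hh hη,
    S.eventually_intervalDensityLE_one hh hη,
    (hh.tendsto_rpow_one_sub 1).eventually_le_const (lt_add_of_pos_right 1 hη)]
    with n hinit hfinal hcard ν hν s t hs hst ht ⟨j, hj⟩
  have := hν.isProbabilityMeasure
  have hts : 0 ≤ t - s := sub_nonneg.2 hst
  have hbound := hν.measureReal_image_le_of_forall_wordsOfLength (l := 1) (L := 1 + η) isWord_nil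
    (by positivity) hs hst ht (A := limitSet S.g n ∩ Icc s t) inter_subset_left ?_
  · simp only [wordComp, image_id, id_eq, abs_of_nonneg hts] at hbound
    exact hbound.trans <| one_add_mul_mul_rpow_le hη.le hηε hcard hν.exponent_pos
      hν.exponent_le_one hts hts (by nlinarith)
  · intro u hu
    obtain ⟨hlength, hu⟩ := mem_wordsOfLength.1 hu
    obtain ⟨k, rfl⟩ := List.length_eq_one_iff.1 hlength
    have hk := (isWord_cons.1 hu).1
    simp only [wordComp, image_id, id_eq, Function.comp_id, S.g_zero k hk.1, S.g_one k hk.1]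
    refine (measureReal_mono (inter_subset_inter_right _ inter_subset_right)).trans ?_
    exact S.measureReal_image_g_inter_Icc_le (by positivity) (hinit ν hν) (hfinal ν hν) hst hj
      (Finset.mem_Icc.2 hk)

theorem isNearOneExponent_of_dimH_eq {h : ℕ → ℝ}
    (h_dim : ∀ n, 1 ≤ n → dimH (limitSet S.g n) = ENNReal.ofReal (h n))
    (hlim : Tendsto (fun n : ℕ => (1 - h n) * Real.log n) atTop (𝓝 0)) : IsNearOneExponent h where
  eventually_le_one := by
    filter_upwards [eventually_ge_atTop 1] with n hn
    rw [← ENNReal.ofReal_le_one, ← h_dim n hn, ← Real.dimH_univ]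
    exact dimH_mono (subset_univ _)
  tendsto_one_sub_mul_log := hlim

theorem hausdorffMeasure_Icc_div_le {h L s t : ℝ} (hpos : 0 < h) (hle : h ≤ 1) (hL : 0 ≤ L)
    (hbound : ∀ ν, S.IsSubconformal n h ν →
      ν.real (limitSet S.g n ∩ Icc s t) ≤ L * (t - s) ^ h) :
    μH[h] (Icc s t ∩ limitSet S.g n) / μH[h] (limitSet S.g n) / ENNReal.ofReal ((t - s) ^ h) ≤
      ENNReal.ofReal L := by
  by_cases hzero : μH[h] (limitSet S.g n) = 0
  · rw [measure_mono_null inter_subset_right hzero, ENNReal.zero_div, ENNReal.zero_div]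
    exact zero_le
  by_cases htop : μH[h] (limitSet S.g n) = ⊤
  · rw [htop, ENNReal.div_top, ENNReal.zero_div]
    exact zero_le
  have hν := S.isSubconformal_normalizedHausdorff hpos hle hzero htop
  have := hν.isProbabilityMeasure
  have hmeasure : μH[h] (Icc s t ∩ limitSet S.g n) / μH[h] (limitSet S.g n) =
      normalizedHausdorff h (limitSet S.g n) (limitSet S.g n ∩ Icc s t) := by
    rw [normalizedHausdorff_apply S.measurableSet_limitSet, inter_right_comm, inter_self,
      inter_comm]
  refine ENNReal.div_le_of_le_mul ?_
  rw [hmeasure, ← ofReal_measureReal, ← ENNReal.ofReal_mul hL]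
  exact ENNReal.ofReal_le_ofReal (hbound _ hν)

end DecreasingIFS

namespace NonlinearIFS

variable (S : NonlinearIFS)

theorem b_pos (k : ℕ) : 0 < S.b k :=
  (S.b_anti.antitone.le_of_tendsto S.b_lim (k + 1)).trans_lt (S.b_anti k.lt_succ_self)

theorem tendsto_b_ratio : Tendsto (fun k => S.b k / S.b (k + 1)) atTop (𝓝 1) :=
  tendsto_of_tendsto_iSup_Ici_of_le one_ne_zero
    (fun k => (one_le_div (S.b_pos _)).2 (S.b_anti.antitone k.le_succ)) S.N2

theorem exists_lipschitzOnWith :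
    ∃ α : ℝ≥0, α < 1 ∧ ∀ k, 1 ≤ k → LipschitzOnWith α (S.g k) (Icc 0 1) := by
  obtain ⟨α, hα, hderiv⟩ := S.N5
  refine ⟨α.toNNReal, Real.toNNReal_lt_one.2 hα, fun k hk => ?_⟩
  refine (convex_Icc 0 1).lipschitzOnWith_of_nnnorm_hasDerivWithin_le
    (fun x hx => (S.deriv1 k hk x hx).hasDerivWithinAt) fun x hx => ?_
  exact NNReal.le_toNNReal_of_coe_le (hderiv k hk x hx).le

theorem exists_secantDistortionOn :
    ∃ c : ℝ≥0, ∀ k, 1 ≤ k → SecantDistortionOn c (S.g k) (Icc 0 1) := by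
  obtain ⟨c, hc, hderiv⟩ := S.N3
  exact ⟨⟨c, hc.le⟩, fun k hk => secantDistortionOn_of_hasDerivAt (convex_Icc 0 1) (S.deriv1 k hk)
    (S.deriv2 k hk) (S.deriv_ne k hk) fun x hx => (hderiv k hk x hx).le⟩

/-- The decreasing system underlying a `NonlinearIFS`, with contraction and distortion constants
extracted from (N5) and (N3). -/
def toDecreasingIFS : DecreasingIFS where
  b := S.b
  g := S.g
  α := S.exists_lipschitzOnWith.choose
  c := S.exists_secantDistortionOn.choose
  b_zero := S.b_zero
  b_lim := S.b_lim
  b_ratio := S.tendsto_b_ratio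
  g_anti := S.g_anti
  g_zero := S.g_zero
  g_one := S.g_one
  α_lt_one := S.exists_lipschitzOnWith.choose_spec.1
  g_lipschitz := S.exists_lipschitzOnWith.choose_spec.2
  g_distortion := S.exists_secantDistortionOn.choose_spec

end NonlinearIFS

theorem nonlinear_density_family_C_general (S : DecreasingIFS) {h : ℕ → ℝ}
    (h_dim : ∀ n, 1 ≤ n → dimH (limitSet S.g n) = ENNReal.ofReal (h n))
    (hlim : Tendsto (fun n : ℕ => (1 - h n) * Real.log n) atTop (𝓝 0)) :
    ∀ ε > (0 : ℝ), ∃ n₀ : ℕ, ∀ n ≥ n₀, ∀ s t : ℝ,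
      0 ≤ s → s < t → t ≤ 1 → (∃ j : ℕ, S.b j ∈ Icc s t) →
      μH[h n] (Icc s t ∩ limitSet S.g n) / μH[h n] (limitSet S.g n) /
        ENNReal.ofReal ((t - s) ^ h n) ≤ ENNReal.ofReal (1 + ε) := by
  intro ε hε
  have hh := S.isNearOneExponent_of_dimH_eq h_dim hlim
  refine eventually_atTop.1 ?_
  filter_upwards [hh.eventually_pos, hh.eventually_le_one, S.eventually_measureReal_Icc_le hh hε]
    with n hpos hle hbound s t hs hst ht hj
  exact S.hausdorffMeasure_Icc_div_le hpos hle (by positivity)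
    fun ν hν => hbound ν hν s t hs hst.le ht hj

/-- In the nonlinear setting, for every `ε > 0` there is `n₀` such that every closed subinterval
    of `[0,1]` meeting `{b_j : j ≥ 0}` has density at most `1 + ε` for all `n ≥ n₀`. -/
theorem nonlinear_density_family_C (S : NonlinearIFS) :
    ∀ ε > (0 : ℝ), ∃ n₀ : ℕ, ∀ n ≥ n₀, ∀ s t : ℝ,
      0 ≤ s → s < t → t ≤ 1 → (∃ j : ℕ, S.b j ∈ Set.Icc s t) →
      normMeas S n (Set.Icc s t) / ENNReal.ofReal ((t - s) ^ S.h n) ≤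
        ENNReal.ofReal (1 + ε) :=
  nonlinear_density_family_C_general S.toDecreasingIFS S.h_dim S.N1
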